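/- Let S be a quasi-hereditary algebra with Ringel dual S'. Then gfd(S) = wfd(S') and wfd(S) = gfd(S'). -/

import Mathlib

/-!
Common definitions for formalizing "On the global and ∇-filtration dimensions of
quasi-hereditary algebras" by Erdmann and Parker.

We work with a finite-dimensional algebra `S` over a field `k`; since `S` is
finite dimensional over `k`, the finite-dimensional `S`-modules are exactly the
finitely generated ones, so we express finite-dimensionality of a module `M` as
`Module.Finite S M`.
-/

open CategoryTheory

namespace QHPaper

variable (S : Type) [Ring S]

/-- The subquotient `B ⧸ A` associated to two submodules `A B` of `M`. -/
abbrev subquot {M : ModuleCat.{0} S} (A B : Submodule S ↥M) : Type :=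
  ↥B ⧸ (Submodule.comap B.subtype A)

/-- A filtration `⊥ = f 0 ≤ f 1 ≤ ⋯ ≤ f n = ⊤` of `M` whose `i`-th section
`f (i+1) / f i` is isomorphic to the prescribed module `D i`. -/
def HasFiltrationWithSections (M : ModuleCat.{0} S) (n : ℕ)
    (f : Fin (n + 1) → Submodule S ↥M) (D : Fin n → ModuleCat.{0} S) : Prop :=
  Monotone f ∧ f 0 = ⊥ ∧ f (Fin.last n) = ⊤ ∧
    ∀ i : Fin n, Nonempty ((subquot S (f i.castSucc) (f i.succ)) ≃ₗ[S] ↥(D i))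

/-- `L` occurs as a (simple) subquotient of `M`; for `L` simple this says that `L`
is a composition factor of `M`. -/
def IsCompFactor (L M : ModuleCat.{0} S) : Prop :=
  ∃ (A B : Submodule S ↥M), A ≤ B ∧ Nonempty ((subquot S A B) ≃ₗ[S] ↥L)

/-- `L` occurs with multiplicity `m` among the sections of a composition series of `M`. -/
def CompFactorMult (L M : ModuleCat.{0} S) (m : ℕ) : Prop :=
  ∃ (n : ℕ) (f : Fin (n + 1) → Submodule S ↥M),
    Monotone f ∧ f 0 = ⊥ ∧ f (Fin.last n) = ⊤ ∧
    (∀ i : Fin n, IsSimpleModule S (subquot S (f i.castSucc) (f i.succ))) ∧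
    Nat.card {i : Fin n // Nonempty ((subquot S (f i.castSucc) (f i.succ)) ≃ₗ[S] ↥L)} = m

/-- `P` is a projective cover of `M`: `P` is projective and there is a surjection
`P → M` whose kernel is superfluous in `P`. -/
def IsProjCover (P M : ModuleCat.{0} S) : Prop :=
  Module.Projective S ↥P ∧ ∃ π : ↥P →ₗ[S] ↥M, Function.Surjective π ∧
    ∀ N : Submodule S ↥P, N ⊔ LinearMap.ker π = ⊤ → N = ⊤

/-- `I` is an injective hull of `M`: `I` is injective and there is an injection
`M → I` with essential image. -/
def IsInjHull (I M : ModuleCat.{0} S) : Prop :=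
  Module.Injective S ↥I ∧ ∃ ι : ↥M →ₗ[S] ↥I, Function.Injective ι ∧
    ∀ N : Submodule S ↥I, N ⊓ LinearMap.range ι = ⊥ → N = ⊥

/-- The data of a quasi-hereditary algebra structure on `S` with weight poset `Λ`:
a full set `L` of pairwise non-isomorphic simple modules, their projective covers `P`
and injective hulls `I`, the standard modules `std` (largest quotient of `P lam` with
all composition factors `L mu`, `mu ≤ lam`), the costandard modules `costd`
(largest submodule of `I lam` with all composition factors `L mu`, `mu ≤ lam`),
such that `L lam` occurs exactly once in `std lam` and `P lam` is filtered by
standard modules `std mu` with `mu ≥ lam`, with `std lam` occurring exactly once. -/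
structure QHData (Λ : Type) [Fintype Λ] [PartialOrder Λ] where
  L : Λ → ModuleCat.{0} S
  P : Λ → ModuleCat.{0} S
  I : Λ → ModuleCat.{0} S
  std : Λ → ModuleCat.{0} S
  costd : Λ → ModuleCat.{0} S
  finiteL : ∀ lam, Module.Finite S ↥(L lam)
  simpleL : ∀ lam, IsSimpleModule S ↥(L lam)
  nonisoL : ∀ lam mu, lam ≠ mu → IsEmpty (↥(L lam) ≃ₗ[S] ↥(L mu))
  fullL : ∀ M : ModuleCat.{0} S, IsSimpleModule S ↥M → ∃ lam, Nonempty (↥M ≃ₗ[S] ↥(L lam))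
  projCover : ∀ lam, IsProjCover S (P lam) (L lam)
  injHull : ∀ lam, IsInjHull S (I lam) (L lam)
  stdSpec : ∀ lam, ∃ K : Submodule S ↥(P lam),
    Nonempty (↥(std lam) ≃ₗ[S] (↥(P lam) ⧸ K)) ∧
    (∀ mu, IsCompFactor S (L mu) (ModuleCat.of S (↥(P lam) ⧸ K)) → mu ≤ lam) ∧
    ∀ K' : Submodule S ↥(P lam),
      (∀ mu, IsCompFactor S (L mu) (ModuleCat.of S (↥(P lam) ⧸ K')) → mu ≤ lam) → K ≤ K'
  costdSpec : ∀ lam, ∃ V : Submodule S ↥(I lam),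
    Nonempty (↥(costd lam) ≃ₗ[S] ↥V) ∧
    (∀ mu, IsCompFactor S (L mu) (ModuleCat.of S ↥V) → mu ≤ lam) ∧
    ∀ V' : Submodule S ↥(I lam),
      (∀ mu, IsCompFactor S (L mu) (ModuleCat.of S ↥V') → mu ≤ lam) → V' ≤ V
  multOne : ∀ lam, CompFactorMult S (L lam) (std lam) 1
  projFilt : ∀ lam, ∃ (n : ℕ) (f : Fin (n + 1) → Submodule S ↥(P lam)) (g : Fin n → Λ),
    HasFiltrationWithSections S (P lam) n f (fun i => std (g i)) ∧
    (∀ i, lam ≤ g i) ∧ Nat.card {i : Fin n // g i = lam} = 1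

variable {Λ : Type} [Fintype Λ] [PartialOrder Λ]

/-- `M` has a filtration with costandard sections, i.e. `M ∈ F(∇)`. -/
def InCostdFilt (Q : QHData S Λ) (M : ModuleCat.{0} S) : Prop :=
  ∃ (n : ℕ) (f : Fin (n + 1) → Submodule S ↥M) (g : Fin n → Λ),
    HasFiltrationWithSections S M n f (fun i => Q.costd (g i))

/-- `M` has a filtration with standard sections, i.e. `M ∈ F(Δ)`. -/
def InStdFilt (Q : QHData S Λ) (M : ModuleCat.{0} S) : Prop :=
  ∃ (n : ℕ) (f : Fin (n + 1) → Submodule S ↥M) (g : Fin n → Λ),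
    HasFiltrationWithSections S M n f (fun i => Q.std (g i))

/-- `0 → N 0 → N 1 → ⋯ → N (n+1) → 0` is exact. -/
def IsExactSeq (n : ℕ) (N : Fin (n + 2) → ModuleCat.{0} S)
    (f : ∀ i : Fin (n + 1), ↥(N i.castSucc) →ₗ[S] ↥(N i.succ)) : Prop :=
  Function.Injective (f 0) ∧ Function.Surjective (f (Fin.last n)) ∧
    ∀ i : Fin n, LinearMap.range (f i.castSucc) = LinearMap.ker (f i.succ)

/-- `M` has a ∇-resolution (co-resolution by modules in `F(∇)`) of length `d`:
`0 → M → M₀ → ⋯ → M_d → 0` with each `Mᵢ ∈ F(∇)`. -/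
def GfdLE (Q : QHData S Λ) (M : ModuleCat.{0} S) (d : ℕ) : Prop :=
  ∃ (N : Fin (d + 2) → ModuleCat.{0} S)
    (f : ∀ i : Fin (d + 1), ↥(N i.castSucc) →ₗ[S] ↥(N i.succ)),
    IsExactSeq S d N f ∧ N 0 = M ∧ ∀ i : Fin (d + 1), InCostdFilt S Q (N i.succ)

/-- The ∇-filtration dimension (good filtration dimension) of a module. -/
noncomputable def gfd (Q : QHData S Λ) (M : ModuleCat.{0} S) : ℕ :=
  sInf {d | GfdLE S Q M d}

/-- `M` has a resolution `0 → M_d → ⋯ → M₀ → M → 0` with each `Mᵢ ∈ F(Δ)`. -/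
def WfdLE (Q : QHData S Λ) (M : ModuleCat.{0} S) (d : ℕ) : Prop :=
  ∃ (N : Fin (d + 2) → ModuleCat.{0} S)
    (f : ∀ i : Fin (d + 1), ↥(N i.castSucc) →ₗ[S] ↥(N i.succ)),
    IsExactSeq S d N f ∧ N (Fin.last (d + 1)) = M ∧
    ∀ i : Fin (d + 1), InStdFilt S Q (N i.castSucc)

/-- The Δ-filtration dimension of a module. -/
noncomputable def wfd (Q : QHData S Λ) (M : ModuleCat.{0} S) : ℕ :=
  sInf {d | WfdLE S Q M d}

/-- `M` has a projective resolution of length `d`. -/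
def ProjdimLE (M : ModuleCat.{0} S) (d : ℕ) : Prop :=
  ∃ (N : Fin (d + 2) → ModuleCat.{0} S)
    (f : ∀ i : Fin (d + 1), ↥(N i.castSucc) →ₗ[S] ↥(N i.succ)),
    IsExactSeq S d N f ∧ N (Fin.last (d + 1)) = M ∧
    ∀ i : Fin (d + 1), Module.Projective S ↥(N i.castSucc)

/-- The projective dimension of a module. -/
noncomputable def projdim (M : ModuleCat.{0} S) : ℕ :=
  sInf {d | ProjdimLE S M d}

/-- `M` has an injective resolution of length `d`. -/
def InjdimLE (M : ModuleCat.{0} S) (d : ℕ) : Prop :=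
  ∃ (N : Fin (d + 2) → ModuleCat.{0} S)
    (f : ∀ i : Fin (d + 1), ↥(N i.castSucc) →ₗ[S] ↥(N i.succ)),
    IsExactSeq S d N f ∧ N 0 = M ∧
    ∀ i : Fin (d + 1), Module.Injective S ↥(N i.succ)

/-- The injective dimension of a module. -/
noncomputable def injdim (M : ModuleCat.{0} S) : ℕ :=
  sInf {d | InjdimLE S M d}

/-- `gfd(S)`: the supremum of the ∇-filtration dimensions of all
finite-dimensional `S`-modules. -/
noncomputable def gfdAlg (Q : QHData S Λ) : ℕ :=
  sSup {d | ∃ M : ModuleCat.{0} S, Module.Finite S ↥M ∧ gfd S Q M = d}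

/-- `wfd(S)`: the supremum of the Δ-filtration dimensions of all
finite-dimensional `S`-modules. -/
noncomputable def wfdAlg (Q : QHData S Λ) : ℕ :=
  sSup {d | ∃ M : ModuleCat.{0} S, Module.Finite S ↥M ∧ wfd S Q M = d}

/-- The global dimension of `S`: the supremum of the projective dimensions of all
finite-dimensional `S`-modules. -/
noncomputable def globdim : ℕ :=
  sSup {d | ∃ M : ModuleCat.{0} S, Module.Finite S ↥M ∧ projdim S M = d}

/-- `Ext^n_S(A, B) ≠ 0`. -/
noncomputable def extNe (A B : ModuleCat.{0} S) (n : ℕ) : Prop :=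
  Nontrivial ↥(((Ext ℤ (ModuleCat.{0} S) n).obj (Opposite.op A)).obj B)

/-- A simple-preserving duality on `S`: a contravariant, exact, fully faithful,
additive self-functor `D` on the category of finite-dimensional `S`-modules with
`D (D M) ≅ M` and `D (L lam) ≅ L lam` for all `lam`. -/
structure Duality (Q : QHData S Λ) where
  D : ModuleCat.{0} S → ModuleCat.{0} S
  Dmap : ∀ {A B : ModuleCat.{0} S}, (↥A →ₗ[S] ↥B) → (↥(D B) →ₗ[S] ↥(D A))
  finD : ∀ M : ModuleCat.{0} S, Module.Finite S ↥M → Module.Finite S ↥(D M)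
  Did : ∀ A : ModuleCat.{0} S, Module.Finite S ↥A →
    Dmap (LinearMap.id : ↥A →ₗ[S] ↥A) = LinearMap.id
  Dcomp : ∀ {A B C : ModuleCat.{0} S}, Module.Finite S ↥A → Module.Finite S ↥B →
    Module.Finite S ↥C → ∀ (f : ↥A →ₗ[S] ↥B) (g : ↥B →ₗ[S] ↥C),
      Dmap (g ∘ₗ f) = Dmap f ∘ₗ Dmap g
  Dadd : ∀ {A B : ModuleCat.{0} S}, Module.Finite S ↥A → Module.Finite S ↥B →
    ∀ (f g : ↥A →ₗ[S] ↥B), Dmap (f + g) = Dmap f + Dmap g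
  Dfull : ∀ {A B : ModuleCat.{0} S}, Module.Finite S ↥A → Module.Finite S ↥B →
    Function.Bijective (fun f : ↥A →ₗ[S] ↥B => Dmap f)
  Dexact : ∀ {A B C : ModuleCat.{0} S}, Module.Finite S ↥A → Module.Finite S ↥B →
    Module.Finite S ↥C → ∀ (f : ↥A →ₗ[S] ↥B) (g : ↥B →ₗ[S] ↥C),
      Function.Injective f → Function.Surjective g →
      LinearMap.range f = LinearMap.ker g →
      Function.Injective (Dmap g) ∧ Function.Surjective (Dmap f) ∧
        LinearMap.range (Dmap g) = LinearMap.ker (Dmap f)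
  Dinvol : ∀ M : ModuleCat.{0} S, Module.Finite S ↥M → Nonempty (↥(D (D M)) ≃ₗ[S] ↥M)
  DL : ∀ lam, Nonempty (↥(D (Q.L lam)) ≃ₗ[S] ↥(Q.L lam))

/-- Strong property A: `mu < lam` implies `gfd (L mu) < gfd (L lam)`. -/
def StrongPropA (Q : QHData S Λ) : Prop :=
  ∀ mu lam : Λ, mu < lam → gfd S Q (Q.L mu) < gfd S Q (Q.L lam)

/-- Property A: `mu < lam` implies `gfd (L mu) ≤ gfd (L lam)`. -/
def PropA (Q : QHData S Λ) : Prop :=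
  ∀ mu lam : Λ, mu < lam → gfd S Q (Q.L mu) ≤ gfd S Q (Q.L lam)

/-- Property B: `mu < lam` implies `wfd (∇ mu) ≤ wfd (∇ lam)`. -/
def PropB (Q : QHData S Λ) : Prop :=
  ∀ mu lam : Λ, mu < lam → wfd S Q (Q.costd mu) ≤ wfd S Q (Q.costd lam)

/-- Property C: `wfd (∇ lam) = gfd S - inj (∇ lam)` for all `lam`. -/
def PropC (Q : QHData S Λ) : Prop :=
  ∀ lam : Λ, wfd S Q (Q.costd lam) = gfdAlg S Q - injdim S (Q.costd lam)

/-- Property D: `wfd (∇ lam) = wfd (L lam)` for all `lam`. -/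
def PropD (Q : QHData S Λ) : Prop :=
  ∀ lam : Λ, wfd S Q (Q.costd lam) = wfd S Q (Q.L lam)

/-- Property E: `mu < lam` implies `inj (∇ mu) ≥ inj (∇ lam)`. -/
def PropE (Q : QHData S Λ) : Prop :=
  ∀ mu lam : Λ, mu < lam → injdim S (Q.costd lam) ≤ injdim S (Q.costd mu)

/-- The partial order is minimal for the quasi-hereditary structure: whenever
`mu < lam` are adjacent, `L mu` is a composition factor of `Δ lam` or of `∇ lam`. -/
def MinimalOrder (Q : QHData S Λ) : Prop :=
  ∀ mu lam : Λ, mu < lam → (¬ ∃ nu, mu < nu ∧ nu < lam) →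
    IsCompFactor S (Q.L mu) (Q.std lam) ∨ IsCompFactor S (Q.L mu) (Q.costd lam)

/-- `S` is connected (indecomposable as an algebra, i.e. one block): the only
central idempotents are `0` and `1`. -/
def ConnectedRing : Prop :=
  ∀ c : S, c * c = c → (∀ s : S, c * s = s * c) → c = 0 ∨ c = 1

/-- A tilting module: a module in `F(Δ) ∩ F(∇)`. -/
def IsTilting (Q : QHData S Λ) (T : ModuleCat.{0} S) : Prop :=
  InStdFilt S Q T ∧ InCostdFilt S Q T

/-- The indecomposable tilting module `T(lam)`: an indecomposable tilting module in
which `L lam` occurs exactly once and all other composition factors `L mu` have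
`mu < lam`. -/
def IsIndecTilting (Q : QHData S Λ) (lam : Λ) (T : ModuleCat.{0} S) : Prop :=
  IsTilting S Q T ∧ Nontrivial ↥T ∧
    (∀ A B : Submodule S ↥T, IsCompl A B → A = ⊥ ∨ B = ⊥) ∧
    CompFactorMult S (Q.L lam) T 1 ∧
    ∀ mu, IsCompFactor S (Q.L mu) T → mu = lam ∨ mu < lam

/-- A full tilting module: a (finite-dimensional) tilting module having every
indecomposable tilting module as a direct summand. -/
def IsFullTilting (Q : QHData S Λ) (T : ModuleCat.{0} S) : Prop :=
  IsTilting S Q T ∧ Module.Finite S ↥T ∧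
    ∀ (lam : Λ) (Tl : ModuleCat.{0} S), IsIndecTilting S Q lam Tl →
      ∃ Cc : ModuleCat.{0} S, Nonempty (↥T ≃ₗ[S] (↥Tl × ↥Cc))

/-- The Ringel dual ring `S' = End_S(T)^op`. -/
abbrev RingelDualRing (T : ModuleCat.{0} S) : Type := (Module.End S ↥T)ᵐᵒᵖ

/-- `Hom_S(T, X)` is a module over `S' = End_S(T)^op` via `f • φ = φ ∘ f`. -/
instance homTModule (T X : ModuleCat.{0} S) :
    Module (RingelDualRing S T) (↥T →ₗ[S] ↥X) where
  smul a φ := φ ∘ₗ a.unop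
  one_smul φ := rfl
  mul_smul a b φ := rfl
  smul_zero a := rfl
  smul_add a φ ψ := rfl
  add_smul a b φ := by
    ext x
    show φ ((a.unop + b.unop) x) = φ (a.unop x) + φ (b.unop x)
    rw [LinearMap.add_apply, map_add]
  zero_smul φ := by
    ext x
    show φ ((0 : Module.End S ↥T) x) = 0
    rw [LinearMap.zero_apply, map_zero]

/-- The `S'`-module `Hom_S(T, X)`, i.e. the image of `X` under the functor
`F = Hom_S(T, -)`. -/
noncomputable def homTMod (T X : ModuleCat.{0} S) :
    ModuleCat.{0} (RingelDualRing S T) :=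
  ModuleCat.of (RingelDualRing S T) (↥T →ₗ[S] ↥X)

/-- `Q'` is a Ringel dual quasi-hereditary structure for `(Q, T)`:
`T` is a full tilting module, `Q'` is a quasi-hereditary structure on
`S' = End_S(T)^op` for the opposite poset, and its standard modules are
`Δ'(lam) = Hom_S(T, ∇(lam))`. -/
def IsRingelDualData (Q : QHData S Λ) (T : ModuleCat.{0} S)
    (Q' : QHData (RingelDualRing S T) Λᵒᵈ) : Prop :=
  IsFullTilting S Q T ∧
    ∀ lam : Λ, Nonempty
      (↥(Q'.std (OrderDual.toDual lam)) ≃ₗ[RingelDualRing S T]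
        (↥T →ₗ[S] ↥(Q.costd lam)))

/-- `0 → T_d → ⋯ → T_0 → M → 0` exact with all `T_i` tilting modules. -/
def TiltResLE (Q : QHData S Λ) (M : ModuleCat.{0} S) (d : ℕ) : Prop :=
  ∃ (N : Fin (d + 2) → ModuleCat.{0} S)
    (f : ∀ i : Fin (d + 1), ↥(N i.castSucc) →ₗ[S] ↥(N i.succ)),
    IsExactSeq S d N f ∧ N (Fin.last (d + 1)) = M ∧
    ∀ i : Fin (d + 1), IsTilting S Q (N i.castSucc)

/-- An idempotent `e` is primitive if it is nonzero and is not the sum of two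
nonzero orthogonal idempotents. -/
def IsPrimitiveIdempotent (e : S) : Prop :=
  e * e = e ∧ e ≠ 0 ∧ ∀ a b : S, a * a = a → b * b = b → a * b = 0 → b * a = 0 →
    e = a + b → a = 0 ∨ b = 0

/-- The additive subgroup `e•M = {m | e • m = m}` of `M` (for `e` idempotent). -/
def cornerSet (eG : S) (M : ModuleCat.{0} S) : AddSubgroup ↥M where
  carrier := {m | eG • m = m}
  add_mem' := by
    intro a b ha hb
    simp only [Set.mem_setOf_eq] at *
    rw [smul_add, ha, hb]
  zero_mem' := by
    simp only [Set.mem_setOf_eq]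
    rw [smul_zero]
  neg_mem' := by
    intro a ha
    simp only [Set.mem_setOf_eq] at *
    rw [smul_neg, ha]

/-- The `R`-module structure on `e•M`, where `ι : R → S` identifies `R` with the
corner ring `eSe` (as a non-unital ring, with `ι 1 = e`). -/
def cornerModuleStructure (R : Type) [Ring R] (ι : R →ₙ+* S) (eG : S)
    (hone : ι 1 = eG) (hrange : ∀ r : R, eG * ι r * eG = ι r)
    (M : ModuleCat.{0} S) : Module R ↥(cornerSet S eG M) where
  smul r m := ⟨ι r • (m : ↥M), by
    have hm : eG • (m : ↥M) = (m : ↥M) := m.2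
    show eG • (ι r • (m : ↥M)) = ι r • (m : ↥M)
    have h : eG • (ι r • (m : ↥M)) = (eG * ι r * eG) • (m : ↥M) := by
      rw [mul_assoc, mul_smul, mul_smul, hm]
    rw [h, hrange]⟩
  one_smul m := by
    apply Subtype.ext
    show ι 1 • (m : ↥M) = (m : ↥M)
    rw [hone]
    exact m.2
  mul_smul r s m := by
    apply Subtype.ext
    show ι (r * s) • (m : ↥M) = ι r • (ι s • (m : ↥M))
    rw [map_mul, mul_smul]
  smul_zero r := by
    apply Subtype.ext
    show ι r • (0 : ↥M) = 0
    rw [smul_zero]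
  smul_add r m n := by
    apply Subtype.ext
    show ι r • ((m : ↥M) + (n : ↥M)) = ι r • (m : ↥M) + ι r • (n : ↥M)
    rw [smul_add]
  add_smul r s m := by
    apply Subtype.ext
    show ι (r + s) • (m : ↥M) = ι r • (m : ↥M) + ι s • (m : ↥M)
    rw [map_add, add_smul]
  zero_smul m := by
    apply Subtype.ext
    show ι 0 • (m : ↥M) = 0
    rw [map_zero, zero_smul]

/-- The `R`-module `e•M`, where `R ≅ eSe` via `ι`. -/
noncomputable def cornerMod (R : Type) [Ring R] (ι : R →ₙ+* S) (eG : S)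
    (hone : ι 1 = eG) (hrange : ∀ r : R, eG * ι r * eG = ι r)
    (M : ModuleCat.{0} S) : ModuleCat.{0} R :=
  @ModuleCat.of R _ ↥(cornerSet S eG M) _
    (cornerModuleStructure S R ι eG hone hrange M)

end QHPaper

/-!
Modules in `F(∇)` are those `X` with `Ext¹(Δ(λ), X) = 0` for all `λ`, and modules in `F(Δ)` are
those `X` with `Ext¹(X, ∇(λ)) = 0` for all `λ`. Counting dimensions along filtrations, this gives
`gfd(S) ≤ n ↔ Ext^{>n}(Δ, Δ) = 0` and `wfd(S) ≤ n ↔ Ext^{>n}(∇, ∇) = 0`.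

Let `F = Hom_S(T, -)`. It is exact and fully faithful on `F(∇)`, sends `∇(λ)` to `Δ'(λ)` and sums of
copies of `T` to projective modules. So a `T`-resolution of `∇(λ)` becomes a projective resolution
of `Δ'(λ)`, and the projective dimension of `Δ'(λ)` is at most `n` if and only if
`Ext^{>n}(∇(λ), ∇) = 0`. Hence `wfd(S) = gfd(S')`.

Dually let `G = D Hom_S(-, T)`, with `D` the `k`-dual. It is exact and fully faithful on `F(Δ)` and
sends sums of copies of `T` to injective modules, so the injective dimension of `GΔ(λ)` is at most
`n` if and only if `Ext^{>n}(Δ, Δ(λ)) = 0`. The comparison `D Hom_S(X, Z) → Hom_{S'}(F Z, G X)`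
shows that `GΔ(λ)` lies in `F(∇')` with quotient `∇'(λ)`, and since Ext over `S'` vanishes in
large degrees, a descending induction moves the bound from the `GΔ(λ)` to the `∇'(λ)`. Hence
`gfd(S) = wfd(S')`.
-/

namespace QHPaper

/-! ### Short exact sequences and the vanishing of Ext -/

section ShortExact

universe u v

variable {R : Type u} [Ring R] {A B C : Type v} [AddCommGroup A] [Module R A]
  [AddCommGroup B] [Module R B] [AddCommGroup C] [Module R C]

/-- A short exact sequence `0 → A → B → C → 0` of modules, stated for unbundled linear maps so
that submodules, quotients and `Hom` spaces can be used without passing to `ModuleCat`. -/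
structure IsShortExact (f : A →ₗ[R] B) (g : B →ₗ[R] C) : Prop where
  injective : Function.Injective f
  surjective : Function.Surjective g
  exact : Function.Exact f g

theorem exists_comp_eq_of_range_le {i : A →ₗ[R] C} (hi : Function.Injective i) {f : B →ₗ[R] C}
    (h : LinearMap.range f ≤ LinearMap.range i) : ∃ u : B →ₗ[R] A, i ∘ₗ u = f :=
  ⟨(LinearEquiv.ofInjective i hi).symm ∘ₗ f.codRestrict _ fun x ↦ h ⟨x, rfl⟩,
    LinearMap.ext fun _ ↦ LinearEquiv.ofInjective_symm_apply (h := hi) ..⟩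

theorem exists_comp_eq_of_ker_le {g : A →ₗ[R] B} (hg : Function.Surjective g) {f : A →ₗ[R] C}
    (h : LinearMap.ker g ≤ LinearMap.ker f) : ∃ u : B →ₗ[R] C, u ∘ₗ g = f :=
  ⟨(LinearMap.ker g).liftQ f h ∘ₗ (g.quotKerEquivOfSurjective hg).symm, LinearMap.ext fun x ↦ by
    have hx : (g.quotKerEquivOfSurjective hg).symm (g x) = Submodule.Quotient.mk x :=
      (LinearEquiv.symm_apply_eq _).2 rfl
    simp only [LinearMap.comp_apply, LinearEquiv.coe_coe, hx, Submodule.liftQ_apply]⟩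

theorem isShortExact_subtype_mkQ (N : Submodule R B) : IsShortExact N.subtype N.mkQ :=
  ⟨N.injective_subtype, N.mkQ_surjective, LinearMap.exact_subtype_mkQ N⟩

theorem isShortExact_ker_subtype {g : B →ₗ[R] C} (hg : Function.Surjective g) :
    IsShortExact (LinearMap.ker g).subtype g :=
  ⟨Submodule.injective_subtype _, hg, LinearMap.exact_subtype_ker_map g⟩

theorem isShortExact_range_mkQ {f : A →ₗ[R] B} (hf : Function.Injective f) :
    IsShortExact f (LinearMap.range f).mkQ :=
  ⟨hf, Submodule.mkQ_surjective _, LinearMap.exact_map_mkQ_range f⟩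

namespace IsShortExact

variable {f : A →ₗ[R] B} {g : B →ₗ[R] C}

theorem shortComplex_shortExact (h : IsShortExact f g) :
    (ShortComplex.mk (ModuleCat.ofHom f) (ModuleCat.ofHom g) (by
      rw [← ModuleCat.ofHom_comp, h.exact.linearMap_comp_eq_zero]; rfl)).ShortExact where
  exact := (ShortComplex.ShortExact.moduleCat_exact_iff_function_exact _).2 h.exact
  mono_f := (ModuleCat.mono_iff_injective _).2 h.injective
  epi_g := (ModuleCat.epi_iff_surjective _).2 h.surjective

theorem exists_restrict_ker_comp {N E : Type v} [AddCommGroup N] [Module R N] [AddCommGroup E]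
    [Module R E] {i : N →ₗ[R] C} {q : C →ₗ[R] E} (h : IsShortExact f g) (hq : IsShortExact i q) :
    ∃ (f' : A →ₗ[R] LinearMap.ker (q ∘ₗ g)) (g' : LinearMap.ker (q ∘ₗ g) →ₗ[R] N),
      IsShortExact f' g' := by
  let f' : A →ₗ[R] LinearMap.ker (q ∘ₗ g) := f.codRestrict _ fun x ↦ by
    rw [LinearMap.mem_ker, LinearMap.comp_apply, h.exact.apply_apply_eq_zero, map_zero]
  obtain ⟨g', hg'⟩ := exists_comp_eq_of_range_le hq.injective
    (f := g ∘ₗ (LinearMap.ker (q ∘ₗ g)).subtype) fun _ ⟨x, hx⟩ ↦ (hq.exact _).1 (hx ▸ x.2)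
  replace hg' (x : LinearMap.ker (q ∘ₗ g)) : i (g' x) = g x := LinearMap.congr_fun hg' x
  refine ⟨f', g', fun a b hab ↦ h.injective (congrArg Subtype.val hab), fun y ↦ ?_, fun y ↦ ?_⟩
  · obtain ⟨x, hx⟩ := h.surjective (i y)
    have hxker : x ∈ LinearMap.ker (q ∘ₗ g) := by
      rw [LinearMap.mem_ker, LinearMap.comp_apply, hx, hq.exact.apply_apply_eq_zero]
    exact ⟨⟨x, hxker⟩, hq.injective ((hg' _).trans hx)⟩
  · rw [← (injective_iff_map_eq_zero' i).1 hq.injective, hg', h.exact]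
    exact ⟨fun ⟨z, hz⟩ ↦ ⟨z, Subtype.ext hz⟩, fun ⟨z, hz⟩ ↦ ⟨z, congrArg Subtype.val hz⟩⟩

end IsShortExact

end ShortExact

section ExtVanish

universe u

variable {R : Type u} [Ring R] {A B C X Y : Type u}
  [AddCommGroup A] [Module R A] [AddCommGroup B] [Module R B] [AddCommGroup C] [Module R C]
  [AddCommGroup X] [Module R X] [AddCommGroup Y] [Module R Y]
  {f : A →ₗ[R] B} {g : B →ₗ[R] C} {n : ℕ}

open Abelian

variable (R) in
/-- The vanishing of `Ext^n_R(X, Y)`, for unbundled modules. -/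
def ExtVanish (X Y : Type u) [AddCommGroup X] [Module R X] [AddCommGroup Y] [Module R Y]
    (n : ℕ) : Prop :=
  ∀ e : Ext.{u} (ModuleCat.of R X) (ModuleCat.of R Y) n, e = 0

namespace ExtVanish

theorem of_projective [Module.Projective R X] (n : ℕ) : ExtVanish R X Y (n + 1) :=
  have := (IsProjective.iff_projective X).1 ‹_›
  fun e ↦ e.eq_zero_of_projective

theorem of_injective [Module.Injective R Y] (n : ℕ) : ExtVanish R X Y (n + 1) :=
  have := Module.injective_object_of_injective_module R Y
  fun e ↦ e.eq_zero_of_injective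

/-- Here and below the first word names the argument of `Ext` in which the short exact sequence
`h` is placed, and the second the term of `h` about which the conclusion is. -/
theorem right_left (h : IsShortExact f g) (hC : ExtVanish R X C n)
    (hB : ExtVanish R X B (n + 1)) : ExtVanish R X A (n + 1) := fun e ↦ by
  obtain ⟨x, rfl⟩ := Ext.covariant_sequence_exact₁ _ h.shortComplex_shortExact e (hB _) rfl
  rw [hC x, Ext.zero_comp]

theorem right_middle (h : IsShortExact f g) (hA : ExtVanish R X A n) (hC : ExtVanish R X C n) :
    ExtVanish R X B n := fun e ↦ by
  obtain ⟨x, rfl⟩ := Ext.covariant_sequence_exact₂ _ h.shortComplex_shortExact e (hC _)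
  rw [hA x, Ext.zero_comp]

theorem right_right (h : IsShortExact f g) (hB : ExtVanish R X B n)
    (hA : ExtVanish R X A (n + 1)) : ExtVanish R X C n := fun e ↦ by
  obtain ⟨x, rfl⟩ := Ext.covariant_sequence_exact₃ _ h.shortComplex_shortExact e rfl (hA _)
  rw [hB x, Ext.zero_comp]

theorem left_left (h : IsShortExact f g) (hB : ExtVanish R B Y n)
    (hC : ExtVanish R C Y (n + 1)) : ExtVanish R A Y n := fun e ↦ by
  obtain ⟨x, rfl⟩ := Ext.contravariant_sequence_exact₁ h.shortComplex_shortExact _ e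
    (add_comm 1 n) (hC _)
  rw [hB x, Ext.comp_zero]

theorem left_middle (h : IsShortExact f g) (hA : ExtVanish R A Y n) (hC : ExtVanish R C Y n) :
    ExtVanish R B Y n := fun e ↦ by
  obtain ⟨x, rfl⟩ := Ext.contravariant_sequence_exact₂ h.shortComplex_shortExact _ e (hA _)
  rw [hC x, Ext.comp_zero]

theorem left_right (h : IsShortExact f g) (hA : ExtVanish R A Y n)
    (hB : ExtVanish R B Y (n + 1)) : ExtVanish R C Y (n + 1) := fun e ↦ by
  obtain ⟨x, rfl⟩ := Ext.contravariant_sequence_exact₃ h.shortComplex_shortExact _ e (hB _)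
    (add_comm 1 n)
  rw [hA x, Ext.comp_zero]

theorem exists_lift (h : IsShortExact f g) (hA : ExtVanish R X A 1) (u : X →ₗ[R] C) :
    ∃ v : X →ₗ[R] B, g ∘ₗ v = u := by
  obtain ⟨x, hx⟩ := Ext.covariant_sequence_exact₃ _ h.shortComplex_shortExact
    (Ext.mk₀ (ModuleCat.ofHom u)) rfl (hA _)
  obtain ⟨v, rfl⟩ := (Ext.mk₀_bijective _ _).2 x
  rw [Ext.mk₀_comp_mk₀] at hx
  exact ⟨v.hom, congrArg ModuleCat.Hom.hom ((Ext.mk₀_bijective _ _).1 hx)⟩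

theorem exists_extension (h : IsShortExact f g) (hC : ExtVanish R C Y 1) (u : A →ₗ[R] Y) :
    ∃ v : B →ₗ[R] Y, v ∘ₗ f = u := by
  obtain ⟨x, hx⟩ := Ext.contravariant_sequence_exact₁ h.shortComplex_shortExact _
    (Ext.mk₀ (ModuleCat.ofHom u)) rfl (hC _)
  obtain ⟨v, rfl⟩ := (Ext.mk₀_bijective _ _).2 x
  rw [Ext.mk₀_comp_mk₀] at hx
  exact ⟨v.hom, congrArg ModuleCat.Hom.hom ((Ext.mk₀_bijective _ _).1 hx)⟩

theorem one_of_lift (h : IsShortExact f g) (hB : ExtVanish R X B 1)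
    (hlift : ∀ u : X →ₗ[R] C, ∃ v : X →ₗ[R] B, g ∘ₗ v = u) : ExtVanish R X A 1 := fun e ↦ by
  obtain ⟨x, rfl⟩ := Ext.covariant_sequence_exact₁ _ h.shortComplex_shortExact e (hB _) rfl
  obtain ⟨u, rfl⟩ := (Ext.mk₀_bijective _ _).2 x
  obtain ⟨v, hv⟩ := hlift u.hom
  rw [show u = ModuleCat.ofHom v ≫ ModuleCat.ofHom g from ModuleCat.hom_ext hv.symm,
    ← Ext.mk₀_comp_mk₀_assoc]
  exact (congrArg ((Ext.mk₀ (ModuleCat.ofHom v)).comp · _)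
    h.shortComplex_shortExact.comp_extClass).trans (Ext.comp_zero ..)

theorem one_of_extension (h : IsShortExact f g) (hB : ExtVanish R B Y 1)
    (hext : ∀ u : A →ₗ[R] Y, ∃ v : B →ₗ[R] Y, v ∘ₗ f = u) : ExtVanish R C Y 1 := fun e ↦ by
  obtain ⟨x, rfl⟩ := Ext.contravariant_sequence_exact₃ h.shortComplex_shortExact _ e (hB _)
    (n₀ := 0) rfl
  obtain ⟨u, rfl⟩ := (Ext.mk₀_bijective _ _).2 x
  obtain ⟨v, hv⟩ := hext u.hom
  rw [show u = ModuleCat.ofHom f ≫ ModuleCat.ofHom v from ModuleCat.hom_ext hv.symm,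
    ← Ext.mk₀_comp_mk₀, ← Ext.comp_assoc_of_second_deg_zero]
  exact (congrArg (Ext.comp · (Ext.mk₀ (ModuleCat.ofHom v)) _)
    h.shortComplex_shortExact.extClass_comp).trans (Ext.zero_comp ..)

theorem one_of_hom_eq_zero_right (h : IsShortExact f g) (hB : ExtVanish R X B 1)
    (hC : ∀ u : X →ₗ[R] C, u = 0) : ExtVanish R X A 1 :=
  one_of_lift h hB fun u ↦ ⟨0, by rw [hC u, LinearMap.comp_zero]⟩

theorem one_of_hom_eq_zero_left (h : IsShortExact f g) (hB : ExtVanish R B Y 1)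
    (hA : ∀ u : A →ₗ[R] Y, u = 0) : ExtVanish R C Y 1 :=
  one_of_extension h hB fun u ↦ ⟨0, by rw [hA u, LinearMap.zero_comp]⟩

section Summand

variable {ι : Type*} [Fintype ι]

theorem right_of_sum_comp_eq_id (i : ι → A →ₗ[R] B) (r : ι → B →ₗ[R] A)
    (h : ∑ j, r j ∘ₗ i j = LinearMap.id) (hB : ExtVanish R X B n) : ExtVanish R X A n :=
  fun e ↦ by
  have hid : 𝟙 (ModuleCat.of R A) = ∑ j, ModuleCat.ofHom (i j) ≫ ModuleCat.ofHom (r j) := by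
    ext : 1
    rw [ModuleCat.hom_sum]
    exact h.symm
  rw [← Ext.comp_mk₀_id e, hid, Ext.mk₀_sum, Ext.comp_sum]
  refine Finset.sum_eq_zero fun j _ ↦ ?_
  rw [← Ext.mk₀_comp_mk₀, ← Ext.comp_assoc_of_third_deg_zero, hB (e.comp _ _), Ext.zero_comp]

theorem left_of_sum_comp_eq_id (i : ι → A →ₗ[R] B) (r : ι → B →ₗ[R] A)
    (h : ∑ j, r j ∘ₗ i j = LinearMap.id) (hB : ExtVanish R B Y n) : ExtVanish R A Y n :=
  fun e ↦ by
  have hid : 𝟙 (ModuleCat.of R A) = ∑ j, ModuleCat.ofHom (i j) ≫ ModuleCat.ofHom (r j) := by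
    ext : 1
    rw [ModuleCat.hom_sum]
    exact h.symm
  rw [← Ext.mk₀_id_comp e, hid, Ext.mk₀_sum, Ext.sum_comp]
  refine Finset.sum_eq_zero fun j _ ↦ ?_
  rw [← Ext.mk₀_comp_mk₀_assoc, hB (Ext.comp _ e _), Ext.comp_zero]

theorem right_of_retract {i : A →ₗ[R] B} {r : B →ₗ[R] A} (h : r ∘ₗ i = LinearMap.id)
    (hB : ExtVanish R X B n) : ExtVanish R X A n :=
  right_of_sum_comp_eq_id (fun _ : Unit ↦ i) (fun _ ↦ r) (by simpa using h) hB

theorem left_of_retract {i : A →ₗ[R] B} {r : B →ₗ[R] A} (h : r ∘ₗ i = LinearMap.id)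
    (hB : ExtVanish R B Y n) : ExtVanish R A Y n :=
  left_of_sum_comp_eq_id (fun _ : Unit ↦ i) (fun _ ↦ r) (by simpa using h) hB

theorem right_congr (e : A ≃ₗ[R] B) (hB : ExtVanish R X B n) : ExtVanish R X A n :=
  right_of_retract (LinearEquiv.symm_comp e) hB

theorem left_congr (e : A ≃ₗ[R] B) (hB : ExtVanish R B Y n) : ExtVanish R A Y n :=
  left_of_retract (LinearEquiv.symm_comp e) hB

theorem of_subsingleton_right [Subsingleton Y] (n : ℕ) : ExtVanish R X Y n := fun e ↦ by
  rw [← Ext.comp_mk₀_id e,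
    show 𝟙 (ModuleCat.of R Y) = 0 from ModuleCat.hom_ext (Subsingleton.elim (α := Y →ₗ[R] Y) _ _),
    Ext.mk₀_zero, Ext.comp_zero]

theorem of_subsingleton_left [Subsingleton X] (n : ℕ) : ExtVanish R X Y n := fun e ↦ by
  rw [← Ext.mk₀_id_comp e,
    show 𝟙 (ModuleCat.of R X) = 0 from ModuleCat.hom_ext (Subsingleton.elim (α := X →ₗ[R] X) _ _),
    Ext.mk₀_zero, Ext.zero_comp]

end Summand

variable {ι : Type} [Finite ι]

theorem pi_right (h : ExtVanish R X Y n) : ExtVanish R X (ι → Y) n := by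
  cases nonempty_fintype ι
  classical
  exact right_of_sum_comp_eq_id (LinearMap.proj (φ := fun _ ↦ Y))
    (LinearMap.single R (fun _ : ι ↦ Y)) (by ext x; simp [Finset.sum_apply]) h

theorem pi_left (h : ExtVanish R X Y n) : ExtVanish R (ι → X) Y n := by
  cases nonempty_fintype ι
  classical
  exact left_of_sum_comp_eq_id (LinearMap.proj (φ := fun _ ↦ X))
    (LinearMap.single R (fun _ : ι ↦ X)) (by ext x; simp [Finset.sum_apply]) h

end ExtVanish

end ExtVanish

/-! ### Filtrations and composition factors -/

section Filtrations

variable {S : Type} [Ring S]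

section Subquotients

variable {M N D : Type} [AddCommGroup M] [Module S M] [AddCommGroup N] [Module S N]
  [AddCommGroup D] [Module S D]

theorem nonempty_subquot_map_equiv_iff {j : M →ₗ[S] N} (hj : Function.Injective j)
    (A B : Submodule S M) :
    Nonempty (subquot (M := ModuleCat.of S N) S (A.map j) (B.map j) ≃ₗ[S] D) ↔
      Nonempty (subquot (M := ModuleCat.of S M) S A B ≃ₗ[S] D) := by
  have e : subquot (M := ModuleCat.of S M) S A B ≃ₗ[S]
      subquot (M := ModuleCat.of S N) S (A.map j) (B.map j) := by
    refine Submodule.Quotient.equiv _ _ (B.equivMapOfInjective j hj) ?_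
    ext ⟨_, b, hb, rfl⟩
    simp only [Submodule.mem_map, Submodule.mem_comap, Submodule.subtype_apply]
    constructor
    · rintro ⟨c, hc, h⟩
      exact ⟨c, hc, congrArg Subtype.val h⟩
    · rintro ⟨c, hc, h⟩
      obtain rfl := hj h
      exact ⟨⟨c, hb⟩, hc, rfl⟩
  exact ⟨fun ⟨φ⟩ ↦ ⟨e.trans φ⟩, fun ⟨φ⟩ ↦ ⟨e.symm.trans φ⟩⟩

theorem nonempty_subquot_comap_equiv_iff {A B N : Submodule S M} (hAB : A ≤ B) (hB : B ≤ N) :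
    Nonempty (subquot (M := ModuleCat.of S N) S (A.comap N.subtype) (B.comap N.subtype) ≃ₗ[S] D) ↔
      Nonempty (subquot (M := ModuleCat.of S M) S A B ≃ₗ[S] D) := by
  rw [← nonempty_subquot_map_equiv_iff N.injective_subtype,
    Submodule.map_comap_eq_of_le (by simpa using hAB.trans hB),
    Submodule.map_comap_eq_of_le (by simpa using hB)]

theorem nonempty_subquot_top_equiv_iff {A : Submodule S M} :
    Nonempty (subquot (M := ModuleCat.of S M) S A ⊤ ≃ₗ[S] D) ↔
      ∃ π : M →ₗ[S] D, IsShortExact A.subtype π := by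
  let e : subquot (M := ModuleCat.of S M) S A ⊤ ≃ₗ[S] M ⧸ A :=
    Submodule.Quotient.equiv _ _ Submodule.topEquiv (by ext x; simp)
  constructor
  · rintro ⟨φ⟩
    refine ⟨(e.symm.trans φ).toLinearMap ∘ₗ A.mkQ, A.injective_subtype,
      (e.symm.trans φ).surjective.comp A.mkQ_surjective, ?_⟩
    rw [LinearMap.exact_iff, LinearEquiv.ker_comp, A.ker_mkQ, A.range_subtype]
  · rintro ⟨π, hπ⟩
    have hker : A = LinearMap.ker π := by rw [LinearMap.exact_iff.1 hπ.exact, A.range_subtype]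
    exact ⟨e.trans ((Submodule.quotEquivOfEq _ _ hker).trans
      (π.quotKerEquivOfSurjective hπ.surjective))⟩

end Subquotients

theorem HasFiltrationWithSections.castSucc {M : ModuleCat.{0} S} {n : ℕ}
    {f : Fin (n + 2) → Submodule S M} {D : Fin (n + 1) → ModuleCat.{0} S}
    (h : HasFiltrationWithSections S M (n + 1) f D) :
    HasFiltrationWithSections S (ModuleCat.of S (f (Fin.last n).castSucc)) n
      (fun i ↦ (f i.castSucc).comap (f (Fin.last n).castSucc).subtype) (fun i ↦ D i.castSucc) := by
  obtain ⟨hmono, hbot, -, hsec⟩ := h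
  refine ⟨fun i j hij ↦ Submodule.comap_mono (hmono (by simpa using hij)), ?_,
    Submodule.comap_subtype_self _, fun i ↦ ?_⟩
  · simpa only [Fin.castSucc_zero, hbot, LinearMap.ker] using Submodule.ker_subtype _
  · exact (nonempty_subquot_comap_equiv_iff (hmono (by simp [Fin.le_def]))
      (hmono (by simp [Fin.le_def]))).2 (hsec i.castSucc)

theorem HasFiltrationWithSections.exists_isShortExact {M : ModuleCat.{0} S} {n : ℕ}
    {f : Fin (n + 2) → Submodule S M} {D : Fin (n + 1) → ModuleCat.{0} S}
    (h : HasFiltrationWithSections S M (n + 1) f D) :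
    ∃ π : M →ₗ[S] D (Fin.last n), IsShortExact (f (Fin.last n).castSucc).subtype π := by
  obtain ⟨-, -, htop, hsec⟩ := h
  have := hsec (Fin.last n)
  rw [Fin.succ_last, htop] at this
  exact nonempty_subquot_top_equiv_iff.1 this

theorem HasFiltrationWithSections.snoc {M K : Type} [AddCommGroup M] [Module S M]
    [AddCommGroup K] [Module S K] {n : ℕ} {f : Fin (n + 1) → Submodule S K}
    {D : Fin (n + 1) → ModuleCat.{0} S} {j : K →ₗ[S] M} {π : M →ₗ[S] D (Fin.last n)}
    (hK : HasFiltrationWithSections S (ModuleCat.of S K) n f (fun i ↦ D i.castSucc))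
    (h : IsShortExact j π) :
    HasFiltrationWithSections S (ModuleCat.of S M) (n + 1)
      (Fin.snoc (α := fun _ ↦ Submodule S M) (fun i ↦ (f i).map j) ⊤) D := by
  obtain ⟨hmono, hbot, htop, hsec⟩ := hK
  refine ⟨Fin.monotone_iff_le_succ.2 fun i ↦ ?_, ?_, Fin.snoc_last _ _, fun i ↦ ?_⟩
  · induction i using Fin.lastCases with
    | last => simp
    | cast i =>
      rw [Fin.succ_castSucc, Fin.snoc_castSucc, Fin.snoc_castSucc]
      exact Submodule.map_mono (hmono i.castSucc_le_succ)
  · rw [← Fin.castSucc_zero, Fin.snoc_castSucc, hbot, Submodule.map_bot]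
  · induction i using Fin.lastCases with
    | last =>
      rw [Fin.succ_last, Fin.snoc_last, Fin.snoc_castSucc, htop, nonempty_subquot_top_equiv_iff,
        Submodule.map_top]
      exact ⟨π, Submodule.injective_subtype _, h.surjective, by
        rw [LinearMap.exact_iff, Submodule.range_subtype, LinearMap.exact_iff.1 h.exact]⟩
    | cast i =>
      rw [Fin.succ_castSucc, Fin.snoc_castSucc, Fin.snoc_castSucc]
      exact (nonempty_subquot_map_equiv_iff h.injective _ _).2 (hsec i)

/-- `IsFiltered D M`: the module `M` has a finite filtration all of whose sections belong to the
family `D`, so that `F(Δ)` and `F(∇)` are the cases `D = Δ` and `D = ∇`. The inductive form peels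
off the top section; see `isFiltered_iff` for chains of submodules. -/
inductive IsFiltered {Λ : Type} (D : Λ → ModuleCat.{0} S) :
    ∀ (M : Type) [AddCommGroup M] [Module S M], Prop
  | of_subsingleton (M : Type) [AddCommGroup M] [Module S M] [Subsingleton M] : IsFiltered D M
  | extend {N M : Type} [AddCommGroup N] [Module S N] [AddCommGroup M] [Module S M] {l : Λ}
    {j : N →ₗ[S] M} {π : M →ₗ[S] D l} (h : IsShortExact j π) (hN : IsFiltered D N) :
    IsFiltered D M

variable {Λ : Type} {D : Λ → ModuleCat.{0} S}

theorem HasFiltrationWithSections.isFiltered {M : ModuleCat.{0} S} {n : ℕ}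
    {f : Fin (n + 1) → Submodule S M} {g : Fin n → Λ}
    (h : HasFiltrationWithSections S M n f (fun i ↦ D (g i))) : IsFiltered D M := by
  induction n generalizing M with
  | zero =>
    have hbot : (⊥ : Submodule S M) = ⊤ := h.2.1.symm.trans h.2.2.1
    have : Subsingleton M := (Submodule.subsingleton_iff S).1 (subsingleton_of_bot_eq_top hbot)
    exact .of_subsingleton M
  | succ n ih =>
    obtain ⟨π, hπ⟩ := h.exists_isShortExact
    exact .extend hπ (ih h.castSucc)

theorem isFiltered_iff {M : ModuleCat.{0} S} :
    IsFiltered D M ↔ ∃ (n : ℕ) (f : Fin (n + 1) → Submodule S M) (g : Fin n → Λ),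
      HasFiltrationWithSections S M n f (fun i ↦ D (g i)) := by
  constructor
  · suffices ∀ (M : Type) [AddCommGroup M] [Module S M], IsFiltered D M →
        ∃ (n : ℕ) (f : Fin (n + 1) → Submodule S M) (g : Fin n → Λ),
          HasFiltrationWithSections S (ModuleCat.of S M) n f (fun i ↦ D (g i)) from this M
    intro M _ _ h
    induction h with
    | of_subsingleton M =>
      exact ⟨0, fun _ ↦ ⊥, Fin.elim0, monotone_const, rfl, Subsingleton.elim _ _,
        fun i ↦ i.elim0⟩
    | @extend N M _ _ _ _ l j π h _ ih =>
      obtain ⟨n, f, g, hf⟩ := ih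
      obtain ⟨π', hπ'⟩ : ∃ π' : M →ₗ[S] D (Fin.snoc (α := fun _ ↦ Λ) g l (Fin.last n)),
          IsShortExact j π' := by
        rw [Fin.snoc_last]
        exact ⟨π, h⟩
      exact ⟨n + 1, _, Fin.snoc g l,
        HasFiltrationWithSections.snoc (by simpa only [Fin.snoc_castSucc] using hf) hπ'⟩
  · rintro ⟨n, f, g, h⟩
    exact h.isFiltered

theorem IsFiltered.of_bot {M Q K : Type} [AddCommGroup M] [Module S M] [AddCommGroup Q]
    [Module S Q] [AddCommGroup K] [Module S K] {l : Λ} {j : K →ₗ[S] M} {π : M →ₗ[S] Q}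
    (e : K ≃ₗ[S] D l) (h : IsShortExact j π) (hQ : IsFiltered D Q) : IsFiltered D M := by
  induction hQ generalizing M with
  | of_subsingleton Q =>
    let φ : M ≃ₗ[S] D l := (LinearEquiv.ofBijective j
      ⟨h.injective, fun x ↦ (h.exact x).1 (Subsingleton.elim _ _)⟩).symm.trans e
    exact .extend (isShortExact_ker_subtype φ.surjective) <|
      have : Subsingleton (LinearMap.ker φ.toLinearMap) := by
        rw [LinearEquiv.ker]; infer_instance
      .of_subsingleton _
  | extend hQ _ ih =>
    obtain ⟨j', π', h'⟩ := h.exists_restrict_ker_comp hQ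
    exact .extend (isShortExact_ker_subtype (hQ.surjective.comp h.surjective)) (ih h')

end Filtrations

/-! ### Finite injective modules over a finite-dimensional algebra -/

section Injectives

variable {k S : Type} [Field k] [Ring S] [Algebra k S]

-- The hypothesis says that `e ↦ (s ↦ ε (s • e))` identifies `E` with `Hom_k(S, W)`.
theorem injective_of_existsUnique_smul {E W : Type} [AddCommGroup E] [Module k E] [Module S E]
    [IsScalarTower k S E] [AddCommGroup W] [Module k W] (ε : E →ₗ[k] W)
    (h : ∀ φ : S →ₗ[k] W, ∃! e : E, ∀ s, ε (s • e) = φ s) : Module.Injective S E where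
  out X Y _ _ _ _ f hf g := by
    let _ : Module k X := Module.compHom X (algebraMap k S)
    let _ : Module k Y := Module.compHom Y (algebraMap k S)
    have : IsScalarTower k S X := .of_algebraMap_smul fun _ _ ↦ rfl
    have : IsScalarTower k S Y := .of_algebraMap_smul fun _ _ ↦ rfl
    obtain ⟨r, hr⟩ := (f.restrictScalars k).exists_leftInverse_of_injective
      (LinearMap.ker_eq_bot.2 hf)
    replace hr (x : X) : r (f x) = x := LinearMap.congr_fun hr x
    let ψ : Y →ₗ[k] W := ε ∘ₗ g.restrictScalars k ∘ₗ r
    choose e he hunique using fun y ↦ h (ψ ∘ₗ (LinearMap.toSpanSingleton S Y y).restrictScalars k)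
    replace he (y : Y) (s : S) : ε (s • e y) = ψ (s • y) := he y s
    replace hunique {y : Y} {z : E} (h : ∀ s : S, ε (s • z) = ψ (s • y)) : z = e y := hunique y z h
    refine ⟨{ toFun := e, map_add' x y := ?_, map_smul' s y := ?_ }, fun x ↦ ?_⟩
    · exact (hunique fun t ↦ by rw [smul_add, map_add, he, he, smul_add, map_add]).symm
    · exact (hunique fun t ↦ by rw [RingHom.id_apply, ← mul_smul, he, mul_smul]).symm
    · refine (hunique fun t ↦ ?_).symm
      rw [← map_smul, ← map_smul]
      exact congrArg (ε ∘ g) (hr (t • x)).symm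

/-- The coinduced module `Hom_k(S, M)`, with `(s • φ) t = φ (t * s)`. Being a synonym it avoids
the action of `S` on the values that `S →ₗ[k] M` carries when `M` is itself an `S`-module. -/
def Coinduced (k S M : Type) [Field k] [Ring S] [Algebra k S] [AddCommGroup M] [Module k M] :
    Type :=
  S →ₗ[k] M

namespace Coinduced

variable {M : Type} [AddCommGroup M] [Module k M]

instance : AddCommGroup (Coinduced k S M) := inferInstanceAs (AddCommGroup (S →ₗ[k] M))

instance : Module k (Coinduced k S M) := inferInstanceAs (Module k (S →ₗ[k] M))

instance : Module S (Coinduced k S M) :=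
  letI : Module Sᵐᵒᵖᵈᵐᵃ (Coinduced k S M) := inferInstanceAs (Module Sᵐᵒᵖᵈᵐᵃ (S →ₗ[k] M))
  Module.compHom _ (show S →+* Sᵐᵒᵖᵈᵐᵃ from (RingEquiv.opOp S).toRingHom)

/-- The identity `Coinduced k S M = (S →ₗ[k] M)`. -/
def toLinearMap : Coinduced k S M ≃ₗ[k] (S →ₗ[k] M) := LinearEquiv.refl k _

theorem toLinearMap_smul (s : S) (φ : Coinduced k S M) (t : S) :
    toLinearMap (s • φ) t = toLinearMap φ (t * s) := rfl

instance : IsScalarTower k S (Coinduced k S M) where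
  smul_assoc c s φ := toLinearMap.injective <| LinearMap.ext fun t ↦ by
    simp [toLinearMap_smul]

instance [Module.Finite k S] [Module.Finite k M] : Module.Finite S (Coinduced k S M) :=
  have : Module.Finite k (Coinduced k S M) := .equiv toLinearMap.symm
  .of_restrictScalars_finite k S _

instance : Module.Injective S (Coinduced k S M) :=
  injective_of_existsUnique_smul (LinearMap.applyₗ 1 ∘ₗ toLinearMap.toLinearMap) fun φ ↦
    ⟨toLinearMap.symm φ, fun s ↦ by simp [toLinearMap_smul], fun ψ hψ ↦ toLinearMap.injective <|
      LinearMap.ext fun s ↦ by simp [← hψ, toLinearMap_smul]⟩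

end Coinduced

variable (S) in
/-- Every finitely generated `S`-module embeds into a finitely generated injective one. Together
with `IsArtinianRing S` this stands in for finite dimensionality over a field. -/
class HasEnoughFiniteInjectives : Prop where
  exists_injective (M : Type) [AddCommGroup M] [Module S M] [Module.Finite S M] :
    ∃ (I : ModuleCat.{0} S) (i : M →ₗ[S] I),
      Module.Finite S I ∧ Module.Injective S I ∧ Function.Injective i

variable (k S) in
theorem hasEnoughFiniteInjectives_of_finite [Module.Finite k S] : HasEnoughFiniteInjectives S where
  exists_injective M _ _ _ := by
    let _ : Module k M := Module.compHom M (algebraMap k S)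
    have : IsScalarTower k S M := .of_algebraMap_smul fun _ _ ↦ rfl
    have : Module.Finite k M := .trans S M
    refine ⟨ModuleCat.of S (Coinduced k S M),
      { toFun m := Coinduced.toLinearMap.symm ((LinearMap.toSpanSingleton S M m).restrictScalars k)
        map_add' m n := Coinduced.toLinearMap.injective <| LinearMap.ext fun s ↦ smul_add s m n
        map_smul' t m := Coinduced.toLinearMap.injective <| LinearMap.ext fun s ↦
          smul_smul s t m }, inferInstanceAs (Module.Finite S (Coinduced k S M)),
      inferInstanceAs (Module.Injective S (Coinduced k S M)), fun m n hmn ↦ ?_⟩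
    have := LinearMap.congr_fun (Coinduced.toLinearMap.symm.injective hmn) 1
    simpa using this

end Injectives

/-! ### Standard and costandard modules -/

section StandardModules

variable {S : Type} [Ring S] {Λ : Type} [Fintype Λ] [PartialOrder Λ]

namespace QHData

variable (Q : QHData S Λ) {A B C M N : Type} [AddCommGroup A] [Module S A] [AddCommGroup B]
  [Module S B] [AddCommGroup C] [Module S C] [AddCommGroup M] [Module S M] [AddCommGroup N]
  [Module S N] {l m : Λ}

section Head

instance projective_P (l : Λ) : Module.Projective S (Q.P l) := (Q.projCover l).1

instance isSimpleModule_L (l : Λ) : IsSimpleModule S (Q.L l) := Q.simpleL l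

instance nontrivial_L (l : Λ) : Nontrivial (Q.L l) := IsSimpleModule.nontrivial S _

instance finite_L (l : Λ) : Module.Finite S (Q.L l) := Q.finiteL l

instance injective_I (l : Λ) : Module.Injective S (Q.I l) := (Q.injHull l).1

/-- The projective cover map `P(λ) → L(λ)`. -/
noncomputable def head (l : Λ) : Q.P l →ₗ[S] Q.L l := (Q.projCover l).2.choose

theorem head_surjective (l : Λ) : Function.Surjective (Q.head l) :=
  (Q.projCover l).2.choose_spec.1

theorem isCoatom_ker_head (l : Λ) : IsCoatom (LinearMap.ker (Q.head l)) :=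
  isSimpleModule_iff_isCoatom.1 <|
    .congr ((Q.head l).quotKerEquivOfSurjective (Q.head_surjective l))

variable {Q}

theorem le_ker_head {N : Submodule S (Q.P l)} (hN : N ≠ ⊤) : N ≤ LinearMap.ker (Q.head l) := by
  by_contra h
  exact hN ((Q.projCover l).2.choose_spec.2 N ((Q.isCoatom_ker_head l).2 _ (right_lt_sup.2 h)))

theorem ker_le_ker_head {f : Q.P l →ₗ[S] M} (hf : f ≠ 0) :
    LinearMap.ker f ≤ LinearMap.ker (Q.head l) :=
  le_ker_head (mt LinearMap.ker_eq_top.1 hf)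

theorem ker_eq_ker_head [IsSimpleModule S M] {f : Q.P l →ₗ[S] M} (hf : f ≠ 0) :
    LinearMap.ker f = LinearMap.ker (Q.head l) := by
  have hcoatom : IsCoatom (LinearMap.ker f) := isSimpleModule_iff_isCoatom.1 <|
    .congr (f.quotKerEquivOfSurjective (LinearMap.surjective_of_ne_zero hf))
  exact ((hcoatom.le_iff_eq (Q.isCoatom_ker_head l).1).1 (ker_le_ker_head hf)).symm

theorem eq_of_hom_L_ne_zero {f : Q.P l →ₗ[S] Q.L m} (hf : f ≠ 0) : l = m := by
  by_contra hne
  exact (Q.nonisoL l m hne).false <|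
    ((Q.head l).quotKerEquivOfSurjective (Q.head_surjective l)).symm.trans <|
      (Submodule.quotEquivOfEq _ _ (ker_eq_ker_head hf).symm).trans <|
        f.quotKerEquivOfSurjective (LinearMap.surjective_of_ne_zero hf)

variable (Q) in
theorem head_ne_zero (l : Λ) : Q.head l ≠ 0 := by
  intro h
  exact (Q.isCoatom_ker_head l).1 (LinearMap.ker_eq_top.2 h)

variable (Q) in
theorem exists_span_singleton_eq_top (l : Λ) : ∃ v : Q.P l, Submodule.span S {v} = ⊤ := by
  obtain ⟨v, hv⟩ : ∃ v, Q.head l v ≠ 0 := by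
    by_contra! h
    exact Q.head_ne_zero l (LinearMap.ext h)
  exact ⟨v, by_contra fun h ↦ hv (le_ker_head h (Submodule.mem_span_singleton_self v))⟩

instance finite_P (l : Λ) : Module.Finite S (Q.P l) := by
  obtain ⟨v, hv⟩ := Q.exists_span_singleton_eq_top l
  exact ⟨⟨{v}, by rwa [Finset.coe_singleton]⟩⟩

end Head

section Factors

variable {Q}

variable (Q) in
/-- `Q.HasFactor μ M`: the simple module `L(μ)` is a composition factor of `M`, expressed by
`Hom(P(μ), M) ≠ 0`; see `isCompFactor_iff`. -/
def HasFactor (m : Λ) (M : Type) [AddCommGroup M] [Module S M] : Prop :=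
  ∃ f : Q.P m →ₗ[S] M, f ≠ 0

theorem HasFactor.of_injective {f : M →ₗ[S] N} (hf : Function.Injective f)
    (h : Q.HasFactor m M) : Q.HasFactor m N := by
  obtain ⟨a, ha⟩ := h
  exact ⟨f ∘ₗ a, fun h0 ↦ ha ((LinearMap.cancel_left hf).1 (h0.trans f.comp_zero.symm))⟩

theorem HasFactor.of_surjective {f : M →ₗ[S] N} (hf : Function.Surjective f)
    (h : Q.HasFactor m N) : Q.HasFactor m M := by
  obtain ⟨a, ha⟩ := h
  obtain ⟨b, rfl⟩ := Module.projective_lifting_property f a hf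
  exact ⟨b, fun hb ↦ ha (by rw [hb, LinearMap.comp_zero])⟩

theorem HasFactor.of_isShortExact {f : A →ₗ[S] B} {g : B →ₗ[S] C} (hs : IsShortExact f g)
    (h : Q.HasFactor m B) : Q.HasFactor m A ∨ Q.HasFactor m C := by
  obtain ⟨a, ha⟩ := h
  by_cases hga : g ∘ₗ a = 0
  · obtain ⟨b, rfl⟩ := exists_comp_eq_of_range_le hs.injective (f := a) <| by
      rw [← hs.exact.linearMap_ker_eq]
      rintro _ ⟨x, rfl⟩
      exact LinearMap.congr_fun hga x
    exact .inl ⟨b, fun hb ↦ ha (by rw [hb, LinearMap.comp_zero])⟩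
  · exact .inr ⟨_, hga⟩

variable (Q) in
theorem hasFactor_L (m : Λ) : Q.HasFactor m (Q.L m) := ⟨_, Q.head_ne_zero m⟩

theorem HasFactor.eq (h : Q.HasFactor l (Q.L m)) : l = m := by
  obtain ⟨_, ha⟩ := h
  exact eq_of_hom_L_ne_zero ha

theorem isCompFactor_iff {M : ModuleCat.{0} S} :
    IsCompFactor S (Q.L m) M ↔ Q.HasFactor m M := by
  constructor
  · rintro ⟨A, B, -, ⟨e⟩⟩
    exact (((Q.hasFactor_L m).of_injective e.symm.injective).of_surjective
      (Submodule.mkQ_surjective _)).of_injective B.injective_subtype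
  · rintro ⟨a, ha⟩
    refine ⟨(LinearMap.ker (Q.head m)).map a, LinearMap.range a, LinearMap.map_le_range, ?_⟩
    let π : Q.P m →ₗ[S] subquot S ((LinearMap.ker (Q.head m)).map a) (LinearMap.range a) :=
      Submodule.mkQ _ ∘ₗ a.rangeRestrict
    have hπ : Function.Surjective π := (Submodule.mkQ_surjective _).comp a.surjective_rangeRestrict
    have hker : LinearMap.ker π = LinearMap.ker (Q.head m) := by
      rw [LinearMap.ker_comp, Submodule.ker_mkQ, ← Submodule.comap_comp,
        LinearMap.subtype_comp_codRestrict, Submodule.comap_map_eq_self (ker_le_ker_head ha)]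
    exact ⟨(π.quotKerEquivOfSurjective hπ).symm.trans <| (Submodule.quotEquivOfEq _ _ hker).trans <|
      (Q.head m).quotKerEquivOfSurjective (Q.head_surjective m)⟩

theorem exists_section_equiv_L {n : ℕ} {f : Fin (n + 1) → Submodule S M} (hbot : f 0 = ⊥)
    (htop : f (Fin.last n) = ⊤)
    (hsimple : ∀ i : Fin n,
      IsSimpleModule S (subquot (M := ModuleCat.of S M) S (f i.castSucc) (f i.succ)))
    {a : Q.P m →ₗ[S] M} (ha : a ≠ 0) :
    ∃ i : Fin n,
      Nonempty (subquot (M := ModuleCat.of S M) S (f i.castSucc) (f i.succ) ≃ₗ[S] Q.L m) ∧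
      ¬ LinearMap.range a ≤ f i.castSucc ∧ (LinearMap.ker (Q.head m)).map a ≤ f i.castSucc := by
  obtain ⟨i, hsucc, hcast⟩ :
      ∃ i : Fin n, LinearMap.range a ≤ f i.succ ∧ ¬ LinearMap.range a ≤ f i.castSucc := by
    by_contra! h
    refine ha (LinearMap.range_eq_bot.1 (eq_bot_iff.2 (hbot ▸ ?_)))
    exact Fin.reverseInduction (motive := fun i ↦ LinearMap.range a ≤ f i) (htop ▸ le_top) h 0
  obtain ⟨ν, ⟨e⟩⟩ := Q.fullL (ModuleCat.of S (subquot (M := ModuleCat.of S M) S _ _)) (hsimple i)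
  let b : Q.P m →ₗ[S] Q.L ν :=
    e.toLinearMap ∘ₗ Submodule.mkQ _ ∘ₗ a.codRestrict (f i.succ) fun x ↦ hsucc ⟨x, rfl⟩
  have hker : LinearMap.ker b = (f i.castSucc).comap a := by
    ext x
    simp [b]
  have hb : b ≠ 0 := fun h ↦ hcast <| by
    have hcomap : (f i.castSucc).comap a = ⊤ := hker.symm.trans (LinearMap.ker_eq_top.2 h)
    rwa [LinearMap.range_eq_map, Submodule.map_le_iff_le_comap, top_le_iff]
  obtain rfl := eq_of_hom_L_ne_zero hb
  exact ⟨i, ⟨e⟩, hcast, Submodule.map_le_iff_le_comap.2 (hker ▸ (ker_eq_ker_head hb).ge)⟩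

end Factors

section Standard

variable {Q}

theorem exists_std_quotient (l : Λ) : ∃ q : Q.P l →ₗ[S] Q.std l, Function.Surjective q ∧
    (∀ m, Q.HasFactor m (Q.std l) → m ≤ l) ∧
    ∀ (M : Type) [AddCommGroup M] [Module S M] (f : Q.P l →ₗ[S] M),
      (∀ m, Q.HasFactor m M → m ≤ l) → LinearMap.ker q ≤ LinearMap.ker f := by
  obtain ⟨K, ⟨e⟩, hle, hK⟩ := Q.stdSpec l
  refine ⟨e.symm.toLinearMap ∘ₗ K.mkQ, e.symm.surjective.comp K.mkQ_surjective,
    fun m hm ↦ hle m (isCompFactor_iff.2 (hm.of_injective e.injective)), fun M _ _ f hf ↦ ?_⟩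
  rw [LinearEquiv.ker_comp, Submodule.ker_mkQ]
  exact hK _ fun m hm ↦ hf m ((isCompFactor_iff.1 hm).of_injective
    (f := f.range.subtype ∘ₗ f.quotKerEquivRange.toLinearMap)
    (Subtype.val_injective.comp f.quotKerEquivRange.injective))

theorem exists_costd_embedding (l : Λ) : ∃ i : Q.costd l →ₗ[S] Q.I l, Function.Injective i ∧
    (∀ m, Q.HasFactor m (Q.costd l) → m ≤ l) ∧
    ∀ W : Submodule S (Q.I l), (∀ m, Q.HasFactor m W → m ≤ l) → W ≤ LinearMap.range i := by
  obtain ⟨V, ⟨e⟩, hle, hV⟩ := Q.costdSpec l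
  refine ⟨V.subtype ∘ₗ e.toLinearMap, V.injective_subtype.comp e.injective,
    fun m hm ↦ hle m (isCompFactor_iff.2 (hm.of_injective e.injective)), fun W hW ↦ ?_⟩
  rw [LinearEquiv.range_comp, Submodule.range_subtype]
  exact hV _ fun m hm ↦ hW m (isCompFactor_iff.1 hm)

theorem HasFactor.le_of_std (h : Q.HasFactor m (Q.std l)) : m ≤ l :=
  (exists_std_quotient l).choose_spec.2.1 m h

theorem HasFactor.le_of_costd (h : Q.HasFactor m (Q.costd l)) : m ≤ l :=
  (exists_costd_embedding l).choose_spec.2.1 m h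

variable (Q) in
/-- The canonical projection `P(λ) → Δ(λ)`. -/
noncomputable def stdMap (l : Λ) : Q.P l →ₗ[S] Q.std l := (exists_std_quotient l).choose

variable (Q) in
theorem stdMap_surjective (l : Λ) : Function.Surjective (Q.stdMap l) :=
  (exists_std_quotient l).choose_spec.1

theorem ker_stdMap_le {f : Q.P l →ₗ[S] M} (hM : ∀ m, Q.HasFactor m M → m ≤ l) :
    LinearMap.ker (Q.stdMap l) ≤ LinearMap.ker f :=
  (exists_std_quotient l).choose_spec.2.2 M f hM

instance finite_std (l : Λ) : Module.Finite S (Q.std l) := .of_surjective _ (Q.stdMap_surjective l)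

theorem exists_stdHead (l : Λ) : ∃ t : Q.std l →ₗ[S] Q.L l, t ∘ₗ Q.stdMap l = Q.head l :=
  exists_comp_eq_of_ker_le (Q.stdMap_surjective l) (ker_stdMap_le fun _ hm ↦ hm.eq.le)

variable (Q) in
/-- The projection of `Δ(λ)` onto its head `L(λ)`. -/
noncomputable def stdHead (l : Λ) : Q.std l →ₗ[S] Q.L l := (exists_stdHead l).choose

variable (Q) in
theorem stdHead_comp_stdMap (l : Λ) : Q.stdHead l ∘ₗ Q.stdMap l = Q.head l :=
  (exists_stdHead l).choose_spec

variable (Q) in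
theorem stdHead_surjective (l : Λ) : Function.Surjective (Q.stdHead l) :=
  .of_comp (g := Q.stdMap l) <| by
    rw [← LinearMap.coe_comp, stdHead_comp_stdMap]
    exact Q.head_surjective l

variable (Q) in
theorem comap_ker_stdHead (l : Λ) :
    (LinearMap.ker (Q.stdHead l)).comap (Q.stdMap l) = LinearMap.ker (Q.head l) := by
  rw [← LinearMap.ker_comp, stdHead_comp_stdMap]

theorem le_ker_stdHead {N : Submodule S (Q.std l)} (hN : N ≠ ⊤) :
    N ≤ LinearMap.ker (Q.stdHead l) := by
  rw [← Submodule.comap_le_comap_iff_of_surjective (Q.stdMap_surjective l), comap_ker_stdHead]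
  exact le_ker_head fun h ↦ hN <|
    Submodule.comap_injective_of_surjective (Q.stdMap_surjective l)
      (h.trans (Submodule.comap_top _).symm)

variable (Q) in
theorem nontrivial_std (l : Λ) : Nontrivial (Q.std l) := (Q.stdHead_surjective l).nontrivial

-- If `m = l`, the only section `L(l)` of a composition series of `Δ(l)` lies above the radical, the
-- image of `ker (Q.head l)`, so it cannot be met by a map from `P(l)` into the radical.
theorem HasFactor.lt_of_ker_stdHead (h : Q.HasFactor m (LinearMap.ker (Q.stdHead l))) :
    m < l := by
  refine lt_of_le_of_ne (h.of_injective (Submodule.injective_subtype _)).le_of_std ?_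
  rintro rfl
  obtain ⟨a, ha⟩ := h
  obtain ⟨n, f, -, hbot, htop, hsimple, hcard⟩ := Q.multOne m
  have : Subsingleton {i : Fin n // Nonempty (subquot S (f i.castSucc) (f i.succ) ≃ₗ[S] Q.L m)} :=
    (Nat.card_eq_one_iff_unique.1 hcard).1
  have hstd : Q.stdMap m ≠ 0 := fun h0 ↦ Q.head_ne_zero m <| by
    rw [← stdHead_comp_stdMap, h0, LinearMap.comp_zero]
  have ha' : (LinearMap.ker (Q.stdHead m)).subtype ∘ₗ a ≠ 0 := fun h0 ↦
    ha ((LinearMap.cancel_left (Submodule.injective_subtype _)).1 (h0.trans (by simp)))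
  obtain ⟨i, hi, -, hker⟩ := exists_section_equiv_L hbot htop hsimple hstd
  obtain ⟨j, hj, hrange, -⟩ := exists_section_equiv_L hbot htop hsimple ha'
  obtain rfl : i = j := congrArg Subtype.val (Subsingleton.elim
    (α := {i : Fin n // Nonempty (subquot S (f i.castSucc) (f i.succ) ≃ₗ[S] Q.L m)})
    ⟨i, hi⟩ ⟨j, hj⟩)
  refine hrange (le_trans ?_ hker)
  rw [← comap_ker_stdHead, Submodule.map_comap_eq_of_surjective (Q.stdMap_surjective m)]
  exact (LinearMap.range_comp_le_range _ _).trans (Submodule.range_subtype _).le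

variable (Q) in
theorem exists_isShortExact_P (l : Λ) :
    ∃ (K : Submodule S (Q.P l)) (π : Q.P l →ₗ[S] Q.std l), IsShortExact K.subtype π ∧
      IsFiltered (fun ν : {ν // l < ν} ↦ Q.std ν) K := by
  obtain ⟨n, f, g, hf, hle, hcard⟩ := Q.projFilt l
  obtain ⟨_, ⟨i₀, hi₀⟩⟩ := Nat.card_eq_one_iff_unique.1 hcard
  cases n with
  | zero => exact i₀.elim0
  | succ n =>
    obtain ⟨π, hπ⟩ := hf.exists_isShortExact
    have hlast : l = g (Fin.last n) := by
      refine eq_of_hom_L_ne_zero (f := Q.stdHead _ ∘ₗ π) fun h0 ↦ ?_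
      obtain ⟨y, hy⟩ := exists_ne (0 : Q.L (g (Fin.last n)))
      obtain ⟨x, rfl⟩ := ((Q.stdHead_surjective _).comp hπ.surjective) y
      exact hy (LinearMap.congr_fun h0 x)
    have hlt (i : Fin n) : l < g i.castSucc := lt_of_le_of_ne (hle _) fun h ↦
      (Fin.castSucc_lt_last i).ne <| congrArg Subtype.val <|
        Subsingleton.elim (α := {i // g i = l}) ⟨i.castSucc, h.symm⟩ ⟨Fin.last n, hlast.symm⟩
    have hK := HasFiltrationWithSections.isFiltered (D := fun ν : {ν // l < ν} ↦ Q.std ν)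
      (g := fun i ↦ ⟨g i.castSucc, hlt i⟩) hf.castSucc
    revert π
    rw [← hlast]
    exact fun π hπ ↦ ⟨_, π, hπ, hK⟩

end Standard

end QHData

end StandardModules

/-! ### Ext between filtered modules -/

section ExtFiltered

variable {S : Type} [Ring S]

section FilteredInduction

variable {Λ : Type} {D : Λ → ModuleCat.{0} S} {M X : Type} [AddCommGroup M] [Module S M]
  [AddCommGroup X] [Module S X] {n : ℕ}

theorem IsFiltered.hom_eq_zero (hM : IsFiltered D M) (hD : ∀ l (u : D l →ₗ[S] X), u = 0)
    (u : M →ₗ[S] X) : u = 0 := by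
  induction hM with
  | of_subsingleton M => exact Subsingleton.elim _ _
  | extend h _ ih =>
    obtain ⟨v, rfl⟩ := exists_comp_eq_of_ker_le h.surjective (f := u) <| by
      rw [h.exact.linearMap_ker_eq, LinearMap.range_le_ker_iff]
      exact ih _
    rw [hD _ v, LinearMap.zero_comp]

theorem IsFiltered.extVanish_left (hM : IsFiltered D M) (hD : ∀ l, ExtVanish S (D l) X n) :
    ExtVanish S M X n := by
  induction hM with
  | of_subsingleton M => exact .of_subsingleton_left n
  | extend h _ ih => exact .left_middle h ih (hD _)

theorem IsFiltered.extVanish_right (hM : IsFiltered D M) (hD : ∀ l, ExtVanish S X (D l) n) :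
    ExtVanish S X M n := by
  induction hM with
  | of_subsingleton M => exact .of_subsingleton_right n
  | extend h _ ih => exact .right_middle h ih (hD _)

end FilteredInduction

namespace QHData

variable {Λ : Type} [Fintype Λ] [PartialOrder Λ] {Q : QHData S Λ} {X : Type} [AddCommGroup X]
  [Module S X] {l m : Λ}

theorem HasFactor.of_hom_std {u : Q.std l →ₗ[S] X} (hu : u ≠ 0) : Q.HasFactor l X :=
  ⟨u ∘ₗ Q.stdMap l, fun h ↦ hu <|
    (LinearMap.cancel_right (Q.stdMap_surjective l)).1 (h.trans (LinearMap.zero_comp _).symm)⟩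

theorem exists_costd_socle (l : Λ) : ∃ s : Q.L l →ₗ[S] Q.costd l, Function.Injective s ∧
    ∀ N : Submodule S (Q.costd l), N ≠ ⊥ → LinearMap.range s ≤ N := by
  obtain ⟨-, j, hj, hess⟩ := Q.injHull l
  obtain ⟨i, hi, -, hmax⟩ := Q.exists_costd_embedding l
  obtain ⟨s, rfl⟩ := exists_comp_eq_of_range_le hi <| hmax (LinearMap.range j) fun m hm ↦
    (hm.of_injective (LinearEquiv.ofInjective j hj).symm.injective).eq.le
  have hs : Function.Injective s := .of_comp (f := i) hj
  have hatom : IsAtom (LinearMap.range s) :=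
    isSimpleModule_iff_isAtom.1 (.congr (LinearEquiv.ofInjective s hs).symm)
  refine ⟨s, hs, fun N hN ↦ ?_⟩
  by_contra hle
  have hdisj : N ⊓ LinearMap.range s = ⊥ := (hatom.not_le_iff_disjoint.1 hle).symm.eq_bot
  refine hN (Submodule.map_injective_of_injective hi ?_)
  rw [Submodule.map_bot]
  refine hess _ ?_
  rw [LinearMap.range_comp, ← Submodule.map_inf _ hi, hdisj, Submodule.map_bot]

variable (Q) in
/-- The embedding of `L(λ)` as the socle of `∇(λ)`. -/
noncomputable def costdSocle (l : Λ) : Q.L l →ₗ[S] Q.costd l := (exists_costd_socle l).choose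

variable (Q) in
theorem costdSocle_injective (l : Λ) : Function.Injective (Q.costdSocle l) :=
  (exists_costd_socle l).choose_spec.1

theorem range_costdSocle_le {N : Submodule S (Q.costd l)} (hN : N ≠ ⊥) :
    LinearMap.range (Q.costdSocle l) ≤ N :=
  (exists_costd_socle l).choose_spec.2 N hN

variable (Q) in
theorem nontrivial_costd (l : Λ) : Nontrivial (Q.costd l) := (Q.costdSocle_injective l).nontrivial

theorem hasFactor_of_ne_bot {N : Submodule S (Q.costd l)} (hN : N ≠ ⊥) : Q.HasFactor l N := by
  obtain ⟨s, hs⟩ := exists_comp_eq_of_range_le N.injective_subtype (f := Q.costdSocle l) <| by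
    rw [Submodule.range_subtype]
    exact range_costdSocle_le hN
  refine (Q.hasFactor_L l).of_injective (f := s) (.of_comp (f := N.subtype) ?_)
  rw [← LinearMap.coe_comp, hs]
  exact Q.costdSocle_injective l

theorem range_le_range_costdSocle (β : Q.std l →ₗ[S] Q.costd l) :
    LinearMap.range β ≤ LinearMap.range (Q.costdSocle l) := by
  have hker : LinearMap.ker (Q.stdHead l) ≤ LinearMap.ker β := by
    by_contra h
    refine lt_irrefl l (HasFactor.lt_of_ker_stdHead (Q := Q) ?_)
    exact (hasFactor_of_ne_bot fun h0 ↦ h (Submodule.map_le_iff_le_comap.1 h0.le)).of_surjective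
      (f := β.submoduleMap (LinearMap.ker (Q.stdHead l))) (β.submoduleMap_surjective _)
  obtain ⟨γ, rfl⟩ := exists_comp_eq_of_ker_le (Q.stdHead_surjective l) hker
  rw [LinearMap.range_comp_of_range_eq_top _ (LinearMap.range_eq_top.2 (Q.stdHead_surjective l))]
  obtain rfl | hγ := eq_or_ne γ 0
  · rw [LinearMap.range_zero]
    exact bot_le
  · have hatom : IsAtom (LinearMap.range γ) := isSimpleModule_iff_isAtom.1 <|
      .congr (LinearEquiv.ofInjective γ (LinearMap.injective_of_ne_zero hγ)).symm
    have hne : LinearMap.range (Q.costdSocle l) ≠ ⊥ := fun h ↦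
      not_subsingleton (Q.L l) ⟨fun x y ↦ Q.costdSocle_injective l <| by
        simp only [LinearMap.range_eq_bot.1 h, LinearMap.zero_apply]⟩
    exact ((hatom.le_iff_eq hne).1 (range_costdSocle_le hatom.1)).ge

theorem HasFactor.lt_of_quot_costdSocle
    (h : Q.HasFactor m (Q.costd l ⧸ LinearMap.range (Q.costdSocle l))) : m < l := by
  refine lt_of_le_of_ne (h.of_surjective (Submodule.mkQ_surjective _)).le_of_costd ?_
  rintro rfl
  obtain ⟨a, ha⟩ := h
  obtain ⟨b, rfl⟩ := Module.projective_lifting_property _ a (Submodule.mkQ_surjective _)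
  obtain ⟨K, π, hπ, hK⟩ := Q.exists_isShortExact_P m
  have hbK : b ∘ₗ K.subtype = 0 := hK.hom_eq_zero (fun ν u ↦ by
    by_contra hu
    exact ν.2.not_ge (HasFactor.of_hom_std hu).le_of_costd) _
  obtain ⟨β, rfl⟩ := exists_comp_eq_of_ker_le hπ.surjective (f := b) <| by
    rwa [hπ.exact.linearMap_ker_eq, LinearMap.range_le_ker_iff]
  refine ha ?_
  rw [← LinearMap.range_le_ker_iff, Submodule.ker_mkQ]
  exact (LinearMap.range_comp_le_range _ _).trans (range_le_range_costdSocle β)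

theorem hom_std_costd_eq_zero (h : l ≠ m) (u : Q.std l →ₗ[S] Q.costd m) : u = 0 := by
  by_contra hu
  refine h (le_antisymm (HasFactor.of_hom_std hu).le_of_costd ?_)
  exact ((hasFactor_of_ne_bot (mt LinearMap.range_eq_bot.1 hu)).of_surjective
    u.surjective_rangeRestrict).le_of_std

theorem extVanish_one_std_costd_of_le (h : l ≤ m) : ExtVanish S (Q.std l) (Q.costd m) 1 := by
  obtain ⟨i, hi, hle, hmax⟩ := Q.exists_costd_embedding m
  have hs := isShortExact_range_mkQ hi
  refine .one_of_hom_eq_zero_right hs (.of_injective 0) fun u ↦ ?_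
  let W := LinearMap.ker ((LinearMap.range u).mkQ ∘ₗ (LinearMap.range i).mkQ)
  obtain ⟨f, g, hW⟩ := hs.exists_restrict_ker_comp (isShortExact_subtype_mkQ (LinearMap.range u))
  have hWi : W ≤ LinearMap.range i := hmax W fun ν hν ↦ by
    rcases hν.of_isShortExact hW with h' | h'
    · exact hle ν h'
    · exact (h'.of_surjective u.surjective_rangeRestrict).le_of_std.trans h
  have hrange : LinearMap.range u = W.map (LinearMap.range i).mkQ := by
    simp only [W, LinearMap.ker_comp, Submodule.ker_mkQ,
      Submodule.map_comap_eq_of_surjective (Submodule.mkQ_surjective _)]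
  rw [← LinearMap.range_eq_bot, hrange, eq_bot_iff, Submodule.map_le_iff_le_comap]
  exact hWi.trans (Submodule.ker_mkQ _).ge

theorem extVanish_one_std_costd_of_not_le (h : ¬ l ≤ m) :
    ExtVanish S (Q.std l) (Q.costd m) 1 := by
  obtain ⟨K, π, hπ, hK⟩ := Q.exists_isShortExact_P l
  refine .one_of_hom_eq_zero_left hπ (.of_projective 0) (hK.hom_eq_zero fun ν u ↦ ?_)
  exact hom_std_costd_eq_zero (fun hνm : (ν : Λ) = m ↦ h (hνm ▸ ν.2.le)) u

variable (Q) in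
theorem extVanish_std_costd (n : ℕ) (l m : Λ) : ExtVanish S (Q.std l) (Q.costd m) (n + 1) := by
  induction n generalizing l with
  | zero =>
    by_cases h : l ≤ m
    exacts [extVanish_one_std_costd_of_le h, extVanish_one_std_costd_of_not_le h]
  | succ n ih =>
    obtain ⟨K, π, hπ, hK⟩ := Q.exists_isShortExact_P l
    exact .left_right hπ (hK.extVanish_left fun ν ↦ ih ν) (.of_projective _)

end QHData

end ExtFiltered

/-! ### Cohomological criteria for `F(Δ)` and `F(∇)` -/

section Criterion

variable {S : Type} [Ring S]

section FilteredFinite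

variable {Λ : Type} {D : Λ → ModuleCat.{0} S} {M X : Type} [AddCommGroup M] [Module S M]
  [AddCommGroup X] [Module S X]

theorem IsFiltered.finite [∀ l, Module.Finite S (D l)] (hM : IsFiltered D M) :
    Module.Finite S M := by
  induction hM with
  | of_subsingleton M => infer_instance
  | extend h _ ih => exact .of_exact h.exact h.surjective

theorem IsFiltered.hom_eq_zero_right (hM : IsFiltered D M) (hD : ∀ l (u : X →ₗ[S] D l), u = 0)
    (u : X →ₗ[S] M) : u = 0 := by
  induction hM with
  | of_subsingleton M => exact Subsingleton.elim _ _
  | extend h _ ih =>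
    obtain ⟨v, rfl⟩ := exists_comp_eq_of_range_le h.injective (f := u) <| by
      rw [← h.exact.linearMap_ker_eq, LinearMap.range_le_ker_iff]
      exact hD _ _
    rw [ih v, LinearMap.comp_zero]

end FilteredFinite

namespace QHData

variable {Λ : Type} [Fintype Λ] [PartialOrder Λ] {Q : QHData S Λ} {M N X : Type}
  [AddCommGroup M] [Module S M] [AddCommGroup N] [Module S N] [AddCommGroup X] [Module S X]
  {l m : Λ}

theorem isFiltered_L [IsArtinianRing S] [Module.Finite S M] {p : Λ → Prop}
    (hM : ∀ ν, Q.HasFactor ν M → p ν) : IsFiltered (fun ν : {ν // p ν} ↦ Q.L ν) M := by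
  have hlen : IsFiniteLength S M :=
    isFiniteLength_iff_isNoetherian_isArtinian.2 ⟨inferInstance, inferInstance⟩
  induction hlen with
  | of_subsingleton => exact .of_subsingleton _
  | @of_simple_quotient M _ _ N _ _ ih =>
    obtain ⟨ν, ⟨e⟩⟩ := Q.fullL (ModuleCat.of S (M ⧸ N)) ‹_›
    have hs : IsShortExact N.subtype (e.toLinearMap ∘ₗ N.mkQ) :=
      ⟨N.injective_subtype, e.surjective.comp N.mkQ_surjective, by
        rw [LinearMap.exact_iff, LinearEquiv.ker_comp, Submodule.ker_mkQ, Submodule.range_subtype]⟩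
    exact .extend (l := ⟨ν, hM ν ((Q.hasFactor_L ν).of_surjective hs.surjective)⟩) hs
      (ih fun μ hμ ↦ hM μ (hμ.of_injective hs.injective))

theorem exists_minimal_hom_L_ne_zero [IsArtinianRing S] [Module.Finite S X] [Nontrivial X] :
    ∃ (l : Λ) (u : Q.L l →ₗ[S] X), u ≠ 0 ∧ ∀ ν < l, ∀ v : Q.L ν →ₗ[S] X, v = 0 := by
  obtain ⟨l, ⟨u, hu⟩, hmin⟩ := WellFounded.has_min (wellFounded_lt (α := Λ))
    {ν | ∃ u : Q.L ν →ₗ[S] X, u ≠ 0} <| by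
      by_contra! h
      have hid : (LinearMap.id : X →ₗ[S] X) = 0 :=
        (Q.isFiltered_L (p := fun _ ↦ True) fun _ _ ↦ trivial).hom_eq_zero (fun ν u ↦ by
          by_contra hu
          exact Set.notMem_empty ν.1 (h ▸ ⟨u, hu⟩)) _
      exact one_ne_zero (α := Module.End S X) hid
  exact ⟨l, u, hu, fun ν hν v ↦ by_contra fun hv ↦ hmin ν ⟨v, hv⟩ hν⟩

theorem exists_minimal_hom_to_L_ne_zero [IsArtinianRing S] [Module.Finite S X] [Nontrivial X] :
    ∃ (l : Λ) (u : X →ₗ[S] Q.L l), u ≠ 0 ∧ ∀ ν < l, ∀ v : X →ₗ[S] Q.L ν, v = 0 := by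
  obtain ⟨l, ⟨u, hu⟩, hmin⟩ := WellFounded.has_min (wellFounded_lt (α := Λ))
    {ν | ∃ u : X →ₗ[S] Q.L ν, u ≠ 0} <| by
      by_contra! h
      have hid : (LinearMap.id : X →ₗ[S] X) = 0 :=
        (Q.isFiltered_L (p := fun _ ↦ True) fun _ _ ↦ trivial).hom_eq_zero_right (fun ν u ↦ by
          by_contra hu
          exact Set.notMem_empty ν.1 (h ▸ ⟨u, hu⟩)) _
      exact one_ne_zero (α := Module.End S X) hid
  exact ⟨l, u, hu, fun ν hν v ↦ by_contra fun hv ↦ hmin ν ⟨v, hv⟩ hν⟩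

instance finite_costd [IsArtinianRing S] [HasEnoughFiniteInjectives S] (l : Λ) :
    Module.Finite S (Q.costd l) := by
  obtain ⟨I, i, _, _, hi⟩ := HasEnoughFiniteInjectives.exists_injective (S := S) (Q.L l)
  obtain ⟨h, hh⟩ := Module.Injective.out (Q.costdSocle l) (Q.costdSocle_injective l) i
  refine Module.Finite.of_injective h ?_
  rw [← LinearMap.ker_eq_bot]
  by_contra hne
  obtain ⟨y, hy⟩ := exists_ne (0 : Q.L l)
  refine hy ((injective_iff_map_eq_zero i).1 hi y ?_)
  rw [← hh, range_costdSocle_le hne ⟨y, rfl⟩]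

variable (Q) in
/-- The finitely generated modules with a good (costandard) filtration, described by the vanishing
of `Ext¹(Δ(λ), -)`; see `isGood_iff`. -/
structure IsGood (X : Type) [AddCommGroup X] [Module S X] : Prop where
  finite : Module.Finite S X
  extVanish_one : ∀ l, ExtVanish S (Q.std l) X 1

variable (Q) in
/-- The finitely generated modules with a Weyl (standard) filtration, described by the vanishing
of `Ext¹(-, ∇(λ))`; see `isWeyl_iff`. -/
structure IsWeyl (X : Type) [AddCommGroup X] [Module S X] : Prop where
  finite : Module.Finite S X
  extVanish_one : ∀ l, ExtVanish S X (Q.costd l) 1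

theorem IsGood.congr (e : M ≃ₗ[S] N) (hM : Q.IsGood M) : Q.IsGood N :=
  have := hM.finite
  ⟨.equiv e, fun l ↦ (hM.extVanish_one l).right_congr e.symm⟩

theorem IsGood.extVanish_one_of_hasFactor_lt [IsArtinianRing S] [Module.Finite S N]
    (hX : Q.IsGood X) (h : ∀ ν < l, ∀ v : Q.L ν →ₗ[S] X, v = 0)
    (hN : ∀ ν, Q.HasFactor ν N → ν < l) : ExtVanish S N X 1 := by
  refine (Q.isFiltered_L hN).extVanish_left fun ν ↦ .one_of_hom_eq_zero_left
    (isShortExact_ker_subtype (Q.stdHead_surjective ν)) (hX.extVanish_one ν) ?_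
  exact (Q.isFiltered_L fun m hm ↦ hm.lt_of_ker_stdHead).hom_eq_zero
    fun m ↦ h m (m.2.trans ν.2)

theorem IsWeyl.extVanish_one_of_hasFactor_lt [IsArtinianRing S] [HasEnoughFiniteInjectives S]
    [Module.Finite S N] (hX : Q.IsWeyl X) (h : ∀ ν < l, ∀ v : X →ₗ[S] Q.L ν, v = 0)
    (hN : ∀ ν, Q.HasFactor ν N → ν < l) : ExtVanish S X N 1 := by
  refine (Q.isFiltered_L hN).extVanish_right fun ν ↦ .one_of_hom_eq_zero_right
    (isShortExact_range_mkQ (Q.costdSocle_injective ν)) (hX.extVanish_one ν) ?_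
  exact (Q.isFiltered_L fun m hm ↦ hm.lt_of_quot_costdSocle).hom_eq_zero_right
    fun m ↦ h m (m.2.trans ν.2)

variable (Q) in
theorem isWeyl_std (l : Λ) : Q.IsWeyl (Q.std l) := ⟨inferInstance, Q.extVanish_std_costd 0 l⟩

variable [IsArtinianRing S] [HasEnoughFiniteInjectives S]

theorem IsGood.exists_injective_costd (hX : Q.IsGood X) [Nontrivial X] :
    ∃ (l : Λ) (i : Q.costd l →ₗ[S] X), Function.Injective i ∧
      Q.IsGood (X ⧸ LinearMap.range i) := by
  have := hX.finite
  obtain ⟨l, u, hu, hmin⟩ := Q.exists_minimal_hom_L_ne_zero (X := X)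
  obtain ⟨i, rfl⟩ := ExtVanish.exists_extension
    (isShortExact_range_mkQ (Q.costdSocle_injective l))
    (hX.extVanish_one_of_hasFactor_lt hmin fun ν ↦ HasFactor.lt_of_quot_costdSocle) u
  have hi : Function.Injective i := by
    rw [← LinearMap.ker_eq_bot]
    by_contra hne
    exact hu (LinearMap.range_le_ker_iff.1 (range_costdSocle_le hne))
  exact ⟨l, i, hi, inferInstance, fun m ↦ .right_right (isShortExact_range_mkQ hi)
    (hX.extVanish_one m) (Q.extVanish_std_costd 1 m l)⟩

theorem IsWeyl.exists_surjective_std (hX : Q.IsWeyl X) [Nontrivial X] :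
    ∃ (l : Λ) (p : X →ₗ[S] Q.std l), Function.Surjective p ∧ Q.IsWeyl (LinearMap.ker p) := by
  have := hX.finite
  obtain ⟨l, u, hu, hmin⟩ := Q.exists_minimal_hom_to_L_ne_zero (X := X)
  obtain ⟨p, rfl⟩ := ExtVanish.exists_lift
    (isShortExact_ker_subtype (Q.stdHead_surjective l))
    (hX.extVanish_one_of_hasFactor_lt hmin fun ν ↦ HasFactor.lt_of_ker_stdHead) u
  have hp : Function.Surjective p := by
    rw [← LinearMap.range_eq_top]
    by_contra hne
    exact hu (LinearMap.range_le_ker_iff.1 (le_ker_stdHead hne))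
  exact ⟨l, p, hp, inferInstance, fun m ↦ .left_left (isShortExact_ker_subtype hp)
    (hX.extVanish_one m) (Q.extVanish_std_costd 1 l m)⟩

theorem isGood_iff : Q.IsGood X ↔ IsFiltered Q.costd X := by
  refine ⟨fun hX ↦ ?_, fun h ↦ ⟨h.finite, fun l ↦ h.extVanish_right (Q.extVanish_std_costd 0 l)⟩⟩
  induction h : Module.length S X using WellFoundedLT.induction generalizing X with
  | ind n ih =>
    subst h
    have := hX.finite
    cases subsingleton_or_nontrivial X
    · exact .of_subsingleton X
    · obtain ⟨l, i, hi, hq⟩ := hX.exists_injective_costd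
      have := Q.nontrivial_costd l
      have hne : LinearMap.range i ≠ ⊥ :=
        mt LinearMap.range_eq_bot.1 (LinearMap.ne_zero_of_injective hi)
      exact .of_bot (.refl S (Q.costd l)) (isShortExact_range_mkQ hi)
        (ih _ (Submodule.length_quotient_lt _ hne) hq rfl)

theorem isWeyl_iff : Q.IsWeyl X ↔ IsFiltered Q.std X := by
  refine ⟨fun hX ↦ ?_,
    fun h ↦ ⟨h.finite, fun m ↦ h.extVanish_left fun l ↦ Q.extVanish_std_costd 0 l m⟩⟩
  induction h : Module.length S X using WellFoundedLT.induction generalizing X with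
  | ind n ih =>
    subst h
    have := hX.finite
    cases subsingleton_or_nontrivial X
    · exact .of_subsingleton X
    · obtain ⟨l, p, hp, hk⟩ := hX.exists_surjective_std
      have := Q.nontrivial_std l
      have hne : LinearMap.ker p ≠ ⊤ :=
        mt LinearMap.ker_eq_top.1 (LinearMap.ne_zero_of_surjective hp)
      exact .extend (isShortExact_ker_subtype hp) (ih _ (Submodule.length_lt hne) hk rfl)

theorem IsWeyl.extVanish (hM : Q.IsWeyl M) (hX : Q.IsGood X) (n : ℕ) :
    ExtVanish S M X (n + 1) :=
  (isWeyl_iff.1 hM).extVanish_left fun l ↦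
    (isGood_iff.1 hX).extVanish_right fun m ↦ Q.extVanish_std_costd n l m

variable (Q) in
theorem isGood_costd (l : Λ) : Q.IsGood (Q.costd l) :=
  ⟨inferInstance, fun m ↦ Q.extVanish_std_costd 0 m l⟩

theorem IsGood.exists_surjective_costd (hX : Q.IsGood X) [Nontrivial X] :
    ∃ (l : Λ) (p : X →ₗ[S] Q.costd l), Function.Surjective p ∧ Q.IsGood (LinearMap.ker p) := by
  cases isGood_iff.1 hX with
  | of_subsingleton => exact (not_subsingleton X ‹_›).elim
  | extend h hN =>
    refine ⟨_, _, h.surjective, ?_⟩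
    rw [h.exact.linearMap_ker_eq]
    exact (isGood_iff.2 hN).congr (LinearEquiv.ofInjective _ h.injective)

end QHData

end Criterion

/-! ### Filtration dimensions -/

section FiltrationDimension

variable {S : Type} [Ring S]

namespace IsExactSeq

variable {d : ℕ} {N : Fin (d + 2) → ModuleCat.{0} S}
  {f : ∀ i : Fin (d + 1), N i.castSucc →ₗ[S] N i.succ} {X Y : Type} [AddCommGroup X] [Module S X]
  [AddCommGroup Y] [Module S Y]

theorem refl (M : ModuleCat.{0} S) : IsExactSeq S 0 (fun _ ↦ M) (fun _ ↦ LinearMap.id) :=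
  ⟨fun _ _ h ↦ h, fun x ↦ ⟨x, rfl⟩, fun i ↦ i.elim0⟩

theorem exists_splice (h : IsExactSeq S d N f) {A B : ModuleCat.{0} S} {i : A →ₗ[S] B}
    {g : B →ₗ[S] N 0} (hs : IsShortExact i g) :
    ∃ (N' : Fin (d + 1 + 2) → ModuleCat.{0} S)
      (f' : ∀ i : Fin (d + 1 + 1), N' i.castSucc →ₗ[S] N' i.succ),
      IsExactSeq S (d + 1) N' f' ∧ N' 0 = A ∧ N' (Fin.succ 0) = B ∧
        ∀ j : Fin (d + 1), N' j.succ.succ = N j.succ := by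
  obtain ⟨hinj, hsurj, hexact⟩ := h
  obtain ⟨g, hs⟩ : ∃ g' : B →ₗ[S] N (Fin.castSucc 0), IsShortExact i g' := ⟨g, hs⟩
  let N' : Fin (d + 1 + 2) → ModuleCat.{0} S := Fin.cases A (Fin.cases B fun j ↦ N j.succ)
  let f' : ∀ i : Fin (d + 1 + 1), N' i.castSucc →ₗ[S] N' i.succ :=
    Fin.cases i <| Fin.cases
      (motive := fun i : Fin (d + 1) ↦ N' i.succ.castSucc →ₗ[S] N' i.succ.succ)
      (f 0 ∘ₗ g) fun j ↦ f j.succ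
  have hker : LinearMap.range i = LinearMap.ker (f 0 ∘ₗ g) := by
    rw [LinearMap.ker_comp_of_ker_eq_bot _ (LinearMap.ker_eq_bot.2 hinj),
      hs.exact.linearMap_ker_eq]
  have hrange : LinearMap.range (f 0 ∘ₗ g) = LinearMap.range (f 0) :=
    LinearMap.range_comp_of_range_eq_top _ (LinearMap.range_eq_top.2 hs.surjective)
  refine ⟨N', f', ⟨hs.injective, ?_, ?_⟩, rfl, rfl, fun j ↦ rfl⟩
  · cases d with
    | zero => exact hsurj.comp hs.surjective
    | succ d => exact hsurj
  · refine Fin.cases hker fun x ↦ ?_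
    cases d with
    | zero => exact x.elim0
    | succ d => exact x.cases (hrange.trans (hexact 0)) fun j ↦ hexact j.succ

theorem isShortExact_range (h : IsExactSeq S d N f) (i : Fin d) :
    IsShortExact (LinearMap.range (f i.castSucc)).subtype (f i.succ).rangeRestrict :=
  ⟨Submodule.injective_subtype _, LinearMap.surjective_rangeRestrict _, by
    rw [LinearMap.exact_iff, LinearMap.ker_rangeRestrict, Submodule.range_subtype, h.2.2 i]⟩

theorem extVanish_right_zero (h : IsExactSeq S d N f)
    (hN : ∀ (i : Fin (d + 1)) (m : ℕ), ExtVanish S X (N i.succ) (m + 1)) {m : ℕ} (hm : d ≤ m) :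
    ExtVanish S X (N 0) (m + 1) := by
  have hrange (i : Fin (d + 1)) :
      ∀ m : ℕ, d ≤ m + i → ExtVanish S X (LinearMap.range (f i)) (m + 1) := by
    induction i using Fin.reverseInduction with
    | last =>
      exact fun m _ ↦
        (hN _ m).right_congr (LinearEquiv.ofTop _ (LinearMap.range_eq_top.2 h.2.1))
    | cast i ih =>
      rintro (_ | m) hm
      · simp only [Fin.val_castSucc] at hm; omega
      · exact .right_left (h.isShortExact_range i)
          (ih m (by simpa [add_assoc, add_comm 1] using hm)) (hN i.castSucc (m + 1))
  exact (hrange 0 m hm).right_congr (LinearEquiv.ofInjective _ h.1)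

theorem extVanish_left_last (h : IsExactSeq S d N f)
    (hN : ∀ (i : Fin (d + 1)) (m : ℕ), ExtVanish S (N i.castSucc) Y (m + 1)) {m : ℕ}
    (hm : d ≤ m) : ExtVanish S (N (Fin.last (d + 1))) Y (m + 1) := by
  have hrange (i : Fin (d + 1)) :
      ∀ m : ℕ, i ≤ m → ExtVanish S (LinearMap.range (f i)) Y (m + 1) := by
    induction i using Fin.induction with
    | zero => exact fun m _ ↦ (hN 0 m).left_congr (LinearEquiv.ofInjective _ h.1).symm
    | succ i ih =>
      rintro (_ | m) hm
      · simp at hm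
      · exact .left_right (h.isShortExact_range i) (ih m (by simpa using hm)) (hN i.succ (m + 1))
  exact (hrange (Fin.last d) m hm).left_congr
    (LinearEquiv.ofTop _ (LinearMap.range_eq_top.2 h.2.1)).symm

theorem extVanish_left_zero (h : IsExactSeq S d N f)
    (hN : ∀ (i : Fin d) (m : ℕ), ExtVanish S (N i.succ.castSucc) Y (m + 1)) {e : ℕ}
    (hlast : ExtVanish S (N (Fin.last (d + 1))) Y (d + e + 1)) : ExtVanish S (N 0) Y (e + 1) := by
  have hrange (i : Fin (d + 1)) :
      ExtVanish S (LinearMap.range (f i)) Y (i + e + 1) → ExtVanish S (N 0) Y (e + 1) := by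
    induction i using Fin.induction with
    | zero => exact fun h0 ↦ .left_congr (LinearEquiv.ofInjective _ h.1) (by simpa using h0)
    | succ i ih =>
      refine fun hi ↦ ih (.left_left (h.isShortExact_range i) (hN i _) ?_)
      simpa [add_right_comm] using hi
  exact hrange (Fin.last d)
    (hlast.left_congr (LinearEquiv.ofTop _ (LinearMap.range_eq_top.2 h.2.1)))

end IsExactSeq

theorem exists_isExactSeq_projective [IsNoetherianRing S] (M : ModuleCat.{0} S)
    [Module.Finite S M] (d : ℕ) :
    ∃ (N : Fin (d + 2) → ModuleCat.{0} S)
      (f : ∀ i : Fin (d + 1), N i.castSucc →ₗ[S] N i.succ),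
      IsExactSeq S d N f ∧ N (Fin.last (d + 1)) = M ∧ Module.Finite S (N 0) ∧
        ∀ i : Fin d, Module.Finite S (N i.succ.castSucc) ∧
          Module.Projective S (N i.succ.castSucc) := by
  induction d with
  | zero => exact ⟨_, _, .refl M, rfl, ‹_›, fun i ↦ i.elim0⟩
  | succ d ih =>
    obtain ⟨N, f, h, hlast, _, hproj⟩ := ih
    obtain ⟨n, p, hp⟩ := Module.Finite.exists_fin' S (N 0)
    obtain ⟨N', f', h', h0, h1, h2⟩ := h.exists_splice
      (A := .of S (LinearMap.ker p)) (B := .of S (Fin n → S)) (isShortExact_ker_subtype hp)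
    refine ⟨N', f', h', (h2 (Fin.last d)).trans hlast, ?_, Fin.cases ?_ fun i ↦ ?_⟩
    · rw [h0]
      exact inferInstanceAs (Module.Finite S (LinearMap.ker p))
    · rw [show N' (Fin.succ 0).castSucc = _ from h1]
      exact ⟨inferInstanceAs (Module.Finite S (Fin n → S)),
        inferInstanceAs (Module.Projective S (Fin n → S))⟩
    · rw [show N' i.succ.succ.castSucc = _ from h2 i.castSucc]
      exact hproj i

theorem sSup_sInf_le_iff {α : Type*} {p : α → Prop} {R : α → ℕ → Prop}
    (h : ∃ b, ∀ M, p M → R M b) (n : ℕ) :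
    sSup {d | ∃ M, p M ∧ sInf {d | R M d} = d} ≤ n ↔ ∀ M, p M → ∃ d ≤ n, R M d := by
  obtain ⟨b, hb⟩ := h
  have hbdd : BddAbove {d | ∃ M, p M ∧ sInf {d | R M d} = d} :=
    ⟨b, by rintro _ ⟨M, hM, rfl⟩; exact Nat.sInf_le (hb M hM)⟩
  constructor
  · exact fun h M hM ↦
      ⟨_, (le_csSup hbdd ⟨M, hM, rfl⟩).trans h, Nat.sInf_mem (s := {d | R M d}) ⟨b, hb M hM⟩⟩
  · rintro h
    refine csSup_le' ?_
    rintro _ ⟨M, hM, rfl⟩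
    obtain ⟨d, hd, hR⟩ := h M hM
    exact (Nat.sInf_le hR).trans hd

namespace QHData

variable {Λ : Type} [Fintype Λ] [PartialOrder Λ] {Q : QHData S Λ}

section GlobalDimension

variable (Q) in
theorem exists_forall_extVanish_std (l : Λ) : ∃ b : ℕ, ∀ (Y : Type) [AddCommGroup Y]
    [Module S Y] (m : ℕ), b < m → ExtVanish S (Q.std l) Y m := by
  induction l using WellFoundedGT.induction with
  | ind l ih =>
    choose b hb using fun ν : {ν // l < ν} ↦ ih ν ν.2
    obtain ⟨B, hB⟩ := (Set.finite_range b).bddAbove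
    obtain ⟨K, π, hs, hK⟩ := Q.exists_isShortExact_P l
    refine ⟨B + 1, fun Y _ _ m hm ↦ ?_⟩
    obtain ⟨m, rfl⟩ := Nat.exists_eq_add_one.2 (show 0 < m by omega)
    exact .left_right hs
      (hK.extVanish_left fun ν ↦ hb ν Y m ((hB ⟨ν, rfl⟩).trans_lt (by omega))) (.of_projective m)

variable [IsArtinianRing S]

variable (Q) in
theorem exists_forall_extVanish_L (l : Λ) : ∃ b : ℕ, ∀ (Y : Type) [AddCommGroup Y]
    [Module S Y] (m : ℕ), b < m → ExtVanish S (Q.L l) Y m := by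
  induction l using WellFoundedLT.induction with
  | ind l ih =>
    choose b hb using fun ν : {ν // ν < l} ↦ ih ν ν.2
    obtain ⟨B, hB⟩ := (Set.finite_range b).bddAbove
    obtain ⟨c, hc⟩ := Q.exists_forall_extVanish_std l
    refine ⟨max B c + 1, fun Y _ _ m hm ↦ ?_⟩
    obtain ⟨m, rfl⟩ := Nat.exists_eq_add_one.2 (show 0 < m by omega)
    refine .left_right (isShortExact_ker_subtype (Q.stdHead_surjective l))
      ((Q.isFiltered_L fun ν hν ↦ hν.lt_of_ker_stdHead).extVanish_left fun ν ↦
        hb ν Y m ((hB ⟨ν, rfl⟩).trans_lt (by omega))) (hc Y _ (by omega))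

theorem exists_forall_extVanish (Q : QHData S Λ) :
    ∃ b : ℕ, ∀ (M Y : Type) [AddCommGroup M] [Module S M] [AddCommGroup Y] [Module S Y]
      [Module.Finite S M] (m : ℕ), b < m → ExtVanish S M Y m := by
  choose b hb using Q.exists_forall_extVanish_L
  obtain ⟨B, hB⟩ := (Set.finite_range b).bddAbove
  exact ⟨B, fun M Y _ _ _ _ _ m hm ↦ (Q.isFiltered_L (p := fun _ ↦ True) fun _ _ ↦
    trivial).extVanish_left fun ν ↦ hb ν Y m ((hB ⟨ν, rfl⟩).trans_lt hm)⟩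

end GlobalDimension

theorem IsGood.of_injective {X : Type} [AddCommGroup X] [Module S X] [Module.Finite S X]
    [Module.Injective S X] : Q.IsGood X := ⟨inferInstance, fun _ ↦ .of_injective 0⟩

theorem IsWeyl.of_projective {X : Type} [AddCommGroup X] [Module S X] [Module.Finite S X]
    [Module.Projective S X] : Q.IsWeyl X := ⟨inferInstance, fun _ ↦ .of_projective 0⟩

variable [IsArtinianRing S] [HasEnoughFiniteInjectives S] {M : ModuleCat.{0} S}

theorem isGood_iff_inCostdFilt : Q.IsGood M ↔ InCostdFilt S Q M := isGood_iff.trans isFiltered_iff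

theorem isWeyl_iff_inStdFilt : Q.IsWeyl M ↔ InStdFilt S Q M := isWeyl_iff.trans isFiltered_iff

theorem gfdLE_of_extVanish {d : ℕ} [Module.Finite S M]
    (h : ∀ l, ExtVanish S (Q.std l) M (d + 1)) : GfdLE S Q M d := by
  induction d generalizing M with
  | zero => exact ⟨_, _, .refl M, rfl, fun _ ↦ isGood_iff_inCostdFilt.1 ⟨‹_›, h⟩⟩
  | succ d ih =>
    obtain ⟨I, i, _, _, hi⟩ := HasEnoughFiniteInjectives.exists_injective (S := S) M
    have hs := isShortExact_range_mkQ hi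
    obtain ⟨N, f, hN, h0, hgood⟩ := ih (M := .of S (I ⧸ LinearMap.range i)) fun l ↦
      .right_right hs (.of_injective d) (h l)
    obtain ⟨g, hg⟩ : ∃ g : I →ₗ[S] N 0, IsShortExact i g := by
      rw [h0]
      exact ⟨_, hs⟩
    obtain ⟨N', f', hN', h0', h1', h2'⟩ := hN.exists_splice hg
    refine ⟨N', f', hN', h0', Fin.cases ?_ fun x ↦ ?_⟩
    · rw [h1']
      exact isGood_iff_inCostdFilt.1 .of_injective
    · rw [h2']
      exact hgood x

theorem _root_.QHPaper.GfdLE.extVanish {d m : ℕ} (h : GfdLE S Q M d) (hm : d ≤ m) (l : Λ) :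
    ExtVanish S (Q.std l) M (m + 1) := by
  obtain ⟨N, f, hN, rfl, hgood⟩ := h
  exact hN.extVanish_right_zero
    (fun i ↦ (Q.isWeyl_std l).extVanish (isGood_iff_inCostdFilt.2 (hgood i))) hm

theorem wfdLE_of_extVanish {d : ℕ} [Module.Finite S M]
    (h : ∀ l, ExtVanish S M (Q.costd l) (d + 1)) : WfdLE S Q M d := by
  obtain ⟨N, f, hN, rfl, hfin, hproj⟩ := exists_isExactSeq_projective M d
  have hweyl (i : Fin d) : Q.IsWeyl (N i.succ.castSucc) :=
    have ⟨_, _⟩ := hproj i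
    .of_projective
  refine ⟨N, f, hN, rfl, Fin.cases (isWeyl_iff_inStdFilt.1 ⟨hfin, fun l ↦ ?_⟩) fun i ↦
    isWeyl_iff_inStdFilt.1 (hweyl i)⟩
  exact hN.extVanish_left_zero (fun i ↦ (hweyl i).extVanish (Q.isGood_costd l)) (h l)

theorem _root_.QHPaper.WfdLE.extVanish {d m : ℕ} (h : WfdLE S Q M d) (hm : d ≤ m) (l : Λ) :
    ExtVanish S M (Q.costd l) (m + 1) := by
  obtain ⟨N, f, hN, rfl, hweyl⟩ := h
  exact hN.extVanish_left_last
    (fun i ↦ (isWeyl_iff_inStdFilt.2 (hweyl i)).extVanish (Q.isGood_costd l)) hm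

theorem gfdAlg_le_iff {n : ℕ} : gfdAlg S Q ≤ n ↔
    ∀ (M : ModuleCat.{0} S) [Module.Finite S M] (l : Λ) (m : ℕ), n ≤ m →
      ExtVanish S (Q.std l) M (m + 1) := by
  obtain ⟨b, hb⟩ := Q.exists_forall_extVanish
  have hbound (M : ModuleCat.{0} S) (_ : Module.Finite S M) : GfdLE S Q M b :=
    gfdLE_of_extVanish fun l ↦ hb _ _ _ b.lt_succ_self
  refine (sSup_sInf_le_iff ⟨b, hbound⟩ n).trans ⟨fun h M hM l m hm ↦ ?_, fun h M hM ↦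
    ⟨n, le_rfl, gfdLE_of_extVanish fun l ↦ h M l n le_rfl⟩⟩
  obtain ⟨d, hd, hMd⟩ := h M hM
  exact hMd.extVanish (hd.trans hm) l

theorem wfdAlg_le_iff {n : ℕ} : wfdAlg S Q ≤ n ↔
    ∀ (M : ModuleCat.{0} S) [Module.Finite S M] (l : Λ) (m : ℕ), n ≤ m →
      ExtVanish S M (Q.costd l) (m + 1) := by
  obtain ⟨b, hb⟩ := Q.exists_forall_extVanish
  have hbound (M : ModuleCat.{0} S) (_ : Module.Finite S M) : WfdLE S Q M b :=
    wfdLE_of_extVanish fun l ↦ hb _ _ _ b.lt_succ_self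
  refine (sSup_sInf_le_iff ⟨b, hbound⟩ n).trans ⟨fun h M hM l m hm ↦ ?_, fun h M hM ↦
    ⟨n, le_rfl, wfdLE_of_extVanish fun l ↦ h M l n le_rfl⟩⟩
  obtain ⟨d, hd, hMd⟩ := h M hM
  exact hMd.extVanish (hd.trans hm) l

-- As the global dimension is finite, descending induction on the degree applies.
theorem gfdAlg_le_iff_std {n : ℕ} : gfdAlg S Q ≤ n ↔
    ∀ (l l' : Λ) (m : ℕ), n ≤ m → ExtVanish S (Q.std l) (Q.std l') (m + 1) := by
  refine gfdAlg_le_iff.trans ⟨fun h l l' m hm ↦ h _ l m hm, fun h ↦ ?_⟩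
  obtain ⟨b, hb⟩ := Q.exists_forall_extVanish
  suffices key : ∀ j m : ℕ, n ≤ m → b ≤ m + j → ∀ (M : ModuleCat.{0} S) [Module.Finite S M]
      (l : Λ), ExtVanish S (Q.std l) M (m + 1) from
    fun M _ l m hm ↦ key b m hm (by omega) M l
  intro j
  induction j with
  | zero => exact fun m _ hm M _ l ↦ hb _ _ _ (by omega)
  | succ j ih =>
    intro m hm hj M _ l
    obtain ⟨r, p, hp⟩ := Module.Finite.exists_fin' S M
    exact .right_right (isShortExact_ker_subtype hp)
      ((isWeyl_iff.1 .of_projective).extVanish_right fun l' ↦ h l l' m hm)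
      (ih (m + 1) (by omega) (by omega) (.of S (LinearMap.ker p)) l)

theorem wfdAlg_le_iff_costd {n : ℕ} : wfdAlg S Q ≤ n ↔
    ∀ (l l' : Λ) (m : ℕ), n ≤ m → ExtVanish S (Q.costd l) (Q.costd l') (m + 1) := by
  refine wfdAlg_le_iff.trans ⟨fun h l l' m hm ↦ h _ l' m hm, fun h ↦ ?_⟩
  obtain ⟨b, hb⟩ := Q.exists_forall_extVanish
  suffices key : ∀ j m : ℕ, n ≤ m → b ≤ m + j → ∀ (M : ModuleCat.{0} S) [Module.Finite S M]
      (l : Λ), ExtVanish S M (Q.costd l) (m + 1) from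
    fun M _ l m hm ↦ key b m hm (by omega) M l
  intro j
  induction j with
  | zero => exact fun m _ hm M _ l ↦ hb _ _ _ (by omega)
  | succ j ih =>
    intro m hm hj M _ l
    obtain ⟨I, i, _, _, hi⟩ := HasEnoughFiniteInjectives.exists_injective (S := S) M
    exact .left_left (isShortExact_range_mkQ hi)
      ((isGood_iff.1 .of_injective).extVanish_left fun l' ↦ h l' l m hm)
      (ih (m + 1) (by omega) (by omega) (.of S (I ⧸ LinearMap.range i)) l)

end QHData

end FiltrationDimension

/-! ### Resolutions by tilting modules -/

section TiltingResolution

variable {S : Type} [Ring S]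

namespace IsShortExact

variable {A B C D P R W : Type} [AddCommGroup A] [Module S A] [AddCommGroup B] [Module S B]
  [AddCommGroup C] [Module S C] [AddCommGroup D] [Module S D] [AddCommGroup P] [Module S P]
  [AddCommGroup R] [Module S R] [AddCommGroup W] [Module S W] {f : A →ₗ[S] B} {g : B →ₗ[S] C}

theorem exists_coprod_comp_eq (h : IsShortExact f g) {a : P →ₗ[S] A} {v : R →ₗ[S] B}
    (ha : ∀ u : W →ₗ[S] A, ∃ w, a ∘ₗ w = u) (hv : ∀ u : W →ₗ[S] C, ∃ w, (g ∘ₗ v) ∘ₗ w = u)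
    (u : W →ₗ[S] B) : ∃ w, (v.coprod (f ∘ₗ a)) ∘ₗ w = u := by
  obtain ⟨w, hw⟩ := hv (g ∘ₗ u)
  obtain ⟨t, ht⟩ := exists_comp_eq_of_range_le h.injective (f := u - v ∘ₗ w) <| by
    rw [← h.exact.linearMap_ker_eq, LinearMap.range_le_ker_iff, LinearMap.comp_sub, ← hw,
      LinearMap.comp_assoc, sub_self]
  obtain ⟨w', rfl⟩ := ha t
  exact ⟨w.prod w', by rw [LinearMap.coprod_comp_prod, LinearMap.comp_assoc, ht, add_sub_cancel]⟩

theorem coprod_surjective (h : IsShortExact f g) {a : P →ₗ[S] A} {v : R →ₗ[S] B}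
    (ha : Function.Surjective a) (hv : Function.Surjective (g ∘ₗ v)) :
    Function.Surjective (v.coprod (f ∘ₗ a)) := fun x ↦ by
  obtain ⟨w, hw⟩ := h.exists_coprod_comp_eq (Module.projective_lifting_property a · ha)
    (Module.projective_lifting_property _ · hv) (LinearMap.toSpanSingleton S B x)
  exact ⟨w 1, by rw [← LinearMap.comp_apply, hw, LinearMap.toSpanSingleton_apply, one_smul]⟩

theorem exists_pullback {K Z I : Type} [AddCommGroup K] [Module S K] [AddCommGroup Z] [Module S Z]
    [AddCommGroup I] [Module S I] {i : C →ₗ[S] I} {q : I →ₗ[S] D} {k : K →ₗ[S] Z}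
    {p : Z →ₗ[S] D} (hi : IsShortExact i q) (hk : IsShortExact k p) :
    ∃ (Y : ModuleCat.{0} S) (f : C →ₗ[S] Y) (g : Y →ₗ[S] Z) (f' : K →ₗ[S] Y) (g' : Y →ₗ[S] I),
      IsShortExact f g ∧ IsShortExact f' g' := by
  let Y := LinearMap.eqLocus (q ∘ₗ LinearMap.fst S I Z) (p ∘ₗ LinearMap.snd S I Z)
  have hY (y : Y) : q y.1.1 = p y.1.2 := y.2
  refine ⟨.of S Y, (LinearMap.inl S I Z ∘ₗ i).codRestrict Y fun c ↦ ?_, .snd S I Z ∘ₗ Y.subtype,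
    (LinearMap.inr S I Z ∘ₗ k).codRestrict Y fun c ↦ ?_, .fst S I Z ∘ₗ Y.subtype,
    ⟨fun x y h ↦ ?_, fun z ↦ ?_, fun y ↦ ⟨fun h ↦ ?_, ?_⟩⟩,
    ⟨fun x y h ↦ ?_, fun x ↦ ?_, fun y ↦ ⟨fun h ↦ ?_, ?_⟩⟩⟩
  · simp [Y, hi.exact.apply_apply_eq_zero]
  · simp [Y, hk.exact.apply_apply_eq_zero]
  · exact hi.injective congr($(h).1.1)
  · obtain ⟨x, hx⟩ := hi.surjective (p z)
    exact ⟨⟨(x, z), hx⟩, rfl⟩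
  · obtain ⟨c, hc⟩ := (hi.exact y.1.1).1 (by rw [hY, show y.1.2 = 0 from h, map_zero])
    exact ⟨c, Subtype.ext (Prod.ext hc h.symm)⟩
  · rintro ⟨c, rfl⟩
    rfl
  · exact hk.injective congr($(h).1.2)
  · obtain ⟨z, hz⟩ := hk.surjective (q x)
    exact ⟨⟨(x, z), hz.symm⟩, rfl⟩
  · obtain ⟨c, hc⟩ := (hk.exact y.1.2).1 (by rw [← hY, show y.1.1 = 0 from h, map_zero])
    exact ⟨c, Subtype.ext (Prod.ext h.symm hc)⟩
  · rintro ⟨c, rfl⟩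
    rfl

end IsShortExact

namespace QHData

variable {Λ : Type} [Fintype Λ] [PartialOrder Λ] {Q : QHData S Λ} {A B C T X : Type}
  [AddCommGroup A] [Module S A] [AddCommGroup B] [Module S B] [AddCommGroup C] [Module S C]
  [AddCommGroup T] [Module S T] [AddCommGroup X] [Module S X] {f : A →ₗ[S] B} {g : B →ₗ[S] C}

theorem IsGood.of_subsingleton [Subsingleton X] : Q.IsGood X :=
  ⟨inferInstance, fun _ ↦ .of_subsingleton_right 1⟩

theorem IsWeyl.of_subsingleton [Subsingleton X] : Q.IsWeyl X :=
  ⟨inferInstance, fun _ ↦ .of_subsingleton_left 1⟩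

theorem IsGood.pi {ι : Type} [Finite ι] (hX : Q.IsGood X) : Q.IsGood (ι → X) :=
  have := hX.finite
  ⟨inferInstance, fun l ↦ (hX.extVanish_one l).pi_right⟩

theorem IsWeyl.pi {ι : Type} [Finite ι] (hX : Q.IsWeyl X) : Q.IsWeyl (ι → X) :=
  have := hX.finite
  ⟨inferInstance, fun l ↦ (hX.extVanish_one l).pi_left⟩

theorem IsGood.middle (h : IsShortExact f g) (hA : Q.IsGood A) (hC : Q.IsGood C) : Q.IsGood B :=
  have := hA.finite
  have := hC.finite
  ⟨.of_exact h.exact h.surjective, fun l ↦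
    .right_middle h (hA.extVanish_one l) (hC.extVanish_one l)⟩

theorem IsWeyl.middle (h : IsShortExact f g) (hA : Q.IsWeyl A) (hC : Q.IsWeyl C) : Q.IsWeyl B :=
  have := hA.finite
  have := hC.finite
  ⟨.of_exact h.exact h.surjective, fun l ↦
    .left_middle h (hA.extVanish_one l) (hC.extVanish_one l)⟩

/-- A tilting module that maps onto every costandard module with a kernel in `F(∇)`. Full tilting
modules are of this kind, and this is all that is used of them. -/
structure IsTiltingGenerator (Q : QHData S Λ) (T : Type) [AddCommGroup T] [Module S T] : Prop where
  isGood : Q.IsGood T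
  isWeyl : Q.IsWeyl T
  exists_surjective : ∀ l, ∃ h : T →ₗ[S] Q.costd l,
    Function.Surjective h ∧ Q.IsGood (LinearMap.ker h)

namespace IsTiltingGenerator

variable [IsArtinianRing S] [HasEnoughFiniteInjectives S]

theorem exists_surjective_pi (hT : Q.IsTiltingGenerator T) (hX : Q.IsGood X) :
    ∃ (n : ℕ) (p : (Fin n → T) →ₗ[S] X), Function.Surjective p ∧ Q.IsGood (LinearMap.ker p) := by
  have := hT.isGood.finite
  have hX' := isGood_iff.1 hX
  clear hX
  induction hX' with
  | of_subsingleton X => exact ⟨0, 0, fun x ↦ ⟨0, Subsingleton.elim _ _⟩, .of_subsingleton⟩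
  | @extend A X _ _ _ _ l f g h hA ih =>
    obtain ⟨n, a, ha, hka⟩ := ih
    obtain ⟨c, hc, hkc⟩ := hT.exists_surjective l
    obtain ⟨v, rfl⟩ := ExtVanish.exists_lift h (hT.isWeyl.extVanish (isGood_iff.2 hA) 0) c
    let e := Fin.consLinearEquiv S fun _ : Fin (n + 1) ↦ T
    have hp : Function.Surjective (v.coprod (f ∘ₗ a) ∘ₗ e.symm.toLinearMap) :=
      (h.coprod_surjective ha hc).comp e.symm.surjective
    refine ⟨n + 1, _, hp, inferInstance, fun m ↦ .one_of_lift (isShortExact_ker_subtype hp)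
      (hT.isGood.pi.extVanish_one m) fun u ↦ ?_⟩
    obtain ⟨w, hw⟩ := h.exists_coprod_comp_eq
      (ExtVanish.exists_lift (isShortExact_ker_subtype ha) (hka.extVanish_one m))
      (ExtVanish.exists_lift (isShortExact_ker_subtype hc) (hkc.extVanish_one m)) u
    exact ⟨e.toLinearMap ∘ₗ w, by rw [← hw]; ext x; simp⟩

theorem exists_isShortExact_isGood_isWeyl (hT : Q.IsTiltingGenerator T) (h : IsShortExact f g)
    (hB : Q.IsGood B) (hC : Q.IsWeyl C) : ∃ (K Z : ModuleCat.{0} S) (i : K →ₗ[S] Z)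
      (p : Z →ₗ[S] A), IsShortExact i p ∧ Q.IsGood K ∧ Q.IsWeyl Z := by
  obtain ⟨n, p, hp, hk⟩ := hT.exists_surjective_pi hB
  have := hT.isGood.finite
  obtain ⟨i, q, hq⟩ := (isShortExact_ker_subtype hp).exists_restrict_ker_comp h
  refine ⟨.of S (LinearMap.ker p), .of S (LinearMap.ker (g ∘ₗ p)), i, q, hq, hk, inferInstance,
    fun l ↦ .left_left (isShortExact_ker_subtype (h.surjective.comp hp))
      (hT.isWeyl.pi.extVanish_one l) (hC.extVanish (Q.isGood_costd l) 1)⟩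

theorem exists_isShortExact_of_extVanish (hT : Q.IsTiltingGenerator T) {d : ℕ} [Module.Finite S X]
    (hX : ∀ l, ExtVanish S (Q.std l) X (d + 1)) : ∃ (Y Z : ModuleCat.{0} S) (i : X →ₗ[S] Y)
      (p : Y →ₗ[S] Z), IsShortExact i p ∧ Q.IsGood Y ∧ Q.IsWeyl Z := by
  induction d generalizing X with
  | zero => exact ⟨.of S X, .of S PUnit, .id, 0, ⟨fun _ _ h ↦ h, fun _ ↦ ⟨0, rfl⟩, fun x ↦
      ⟨fun _ ↦ ⟨x, rfl⟩, fun _ ↦ rfl⟩⟩, ⟨‹_›, hX⟩, .of_subsingleton⟩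
  | succ d ih =>
    obtain ⟨I, i, _, _, hi⟩ := HasEnoughFiniteInjectives.exists_injective (S := S) X
    have hs := isShortExact_range_mkQ hi
    obtain ⟨Y, Z, f, g, h, hY, hZ⟩ := ih fun l ↦ .right_right hs (.of_injective d) (hX l)
    obtain ⟨K, W, j, p, hp, hK, hW⟩ := hT.exists_isShortExact_isGood_isWeyl h hY hZ
    obtain ⟨V, f, g, f', g', h, h'⟩ := hs.exists_pullback hp
    exact ⟨V, W, f, g, h, .middle h' hK .of_injective, hW⟩

theorem exists_injective_pi (hT : Q.IsTiltingGenerator T) (hX : Q.IsWeyl X) :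
    ∃ (n : ℕ) (j : X →ₗ[S] (Fin n → T)), Function.Injective j ∧
      Q.IsWeyl ((Fin n → T) ⧸ LinearMap.range j) := by
  obtain ⟨b, hb⟩ := Q.exists_forall_extVanish
  have := hX.finite
  have := hT.isGood.finite
  obtain ⟨W, Z, f, g, h, hW, hZ⟩ := hT.exists_isShortExact_of_extVanish (X := X)
    fun l ↦ hb _ _ _ b.lt_succ_self
  obtain ⟨n, p, hp, hk⟩ := hT.exists_surjective_pi hW
  obtain ⟨s, hs⟩ := ExtVanish.exists_lift (isShortExact_ker_subtype hp)
    ((hX.middle h hZ).extVanish hk 0) .id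
  have hj : Function.Injective (s ∘ₗ f) :=
    (Function.LeftInverse.injective (f := s) (g := p) (LinearMap.congr_fun hs)).comp h.injective
  refine ⟨n, s ∘ₗ f, hj, inferInstance, fun l ↦ .one_of_extension (isShortExact_range_mkQ hj)
    (hT.isWeyl.pi.extVanish_one l) fun u ↦ ?_⟩
  obtain ⟨v, rfl⟩ := ExtVanish.exists_extension h (hZ.extVanish_one l) u
  exact ⟨v ∘ₗ p, by rw [LinearMap.comp_assoc, ← LinearMap.comp_assoc f, hs, LinearMap.id_comp]⟩

end IsTiltingGenerator

end QHData

end TiltingResolution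

/-! ### The functors `Hom_S(T, -)` and `D Hom_S(-, T)` -/

section DomainAction

variable {R A V W W' : Type*} [Ring R] [Ring A] [AddCommGroup V] [Module R V] [Module A V]
  [SMulCommClass R A V] [AddCommGroup W] [Module R W] [AddCommGroup W'] [Module R W']

/-- The right action of `A` on `Hom_R(V, W)` through `V`. It makes both `Hom_S(T, X)` and
`Hom_k(Hom_S(X, T), k)` left modules over `End_S(T)ᵐᵒᵖ`. -/
instance domainOpModule : Module Aᵐᵒᵖ (V →ₗ[R] W) := inferInstanceAs (Module Aᵈᵐᵃ (V →ₗ[R] W))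

theorem op_smul_apply (a : Aᵐᵒᵖ) (f : V →ₗ[R] W) (v : V) : (a • f) v = f (a.unop • v) := rfl

variable (A V) in
/-- The functor `Hom_R(V, -)` on maps, with values in `Aᵐᵒᵖ`-modules. -/
def homMap (g : W →ₗ[R] W') : (V →ₗ[R] W) →ₗ[Aᵐᵒᵖ] (V →ₗ[R] W') where
  toFun f := g ∘ₗ f
  map_add' f f' := LinearMap.comp_add f f' g
  map_smul' _ _ := rfl

@[simp]
theorem homMap_apply (g : W →ₗ[R] W') (f : V →ₗ[R] W) : homMap A V g f = g ∘ₗ f := rfl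

end DomainAction

section Dual

open Module

universe v

variable {k A : Type*} {U V W : Type v} [Field k] [Ring A] [Algebra k A]
  [AddCommGroup U] [Module k U] [Module A U] [IsScalarTower k A U]
  [AddCommGroup V] [Module k V] [Module A V] [IsScalarTower k A V]
  [AddCommGroup W] [Module k W] [Module A W] [IsScalarTower k A W]

instance : IsScalarTower k Aᵐᵒᵖ (Dual k V) where
  smul_assoc c a φ := LinearMap.ext fun v ↦ by
    simp [op_smul_apply]

instance [FiniteDimensional k V] : Module.Finite Aᵐᵒᵖ (Dual k V) :=
  .of_restrictScalars_finite k Aᵐᵒᵖ _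

variable (k) in
/-- The `k`-dual of an `A`-linear map, as a map of `Aᵐᵒᵖ`-modules. -/
def dualMapOp (f : V →ₗ[A] W) : Dual k W →ₗ[Aᵐᵒᵖ] Dual k V where
  toFun := (f.restrictScalars k).dualMap
  map_add' _ _ := rfl
  map_smul' a φ := LinearMap.ext fun v ↦ congrArg φ (map_smul f a.unop v).symm

theorem dualMapOp_injective : Function.Injective (dualMapOp k : (V →ₗ[A] W) → _) := fun _ _ h ↦
  LinearMap.ext fun v ↦ eval_apply_injective k <| LinearMap.ext fun φ ↦ congr($h φ v)

theorem exists_dualMapOp_eq [FiniteDimensional k V] (ρ : Dual k V →ₗ[Aᵐᵒᵖ] Dual k W) :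
    ∃ f : W →ₗ[A] V, dualMapOp k f = ρ := by
  have ev (w : W) : ∃ v : V, ∀ φ : Dual k V, φ v = ρ φ w :=
    have ⟨v, hv⟩ := (evalEquiv k V).surjective ((ρ.restrictScalars k).flip w)
    ⟨v, fun φ ↦ congr($hv φ)⟩
  choose f hf using ev
  have hext {v v' : V} (h : ∀ φ : Dual k V, φ v = φ v') : v = v' :=
    eval_apply_injective k (LinearMap.ext h)
  refine ⟨⟨⟨f, fun w w' ↦ hext fun φ ↦ ?_⟩, fun a w ↦ hext fun φ ↦ ?_⟩,
    LinearMap.ext fun φ ↦ LinearMap.ext fun w ↦ hf w φ⟩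
  · simp only [map_add, hf]
  · have := hf w (MulOpposite.op a • φ)
    rw [map_smul] at this
    exact (hf _ φ).trans this.symm

theorem IsShortExact.dualMapOp {f : U →ₗ[A] V} {g : V →ₗ[A] W} (h : IsShortExact f g) :
    IsShortExact (dualMapOp k g) (dualMapOp k f) := by
  let f' := f.restrictScalars k
  let g' := g.restrictScalars k
  have hfg : LinearMap.ker g' = LinearMap.range f' := LinearMap.exact_iff.1 h.exact
  refine ⟨LinearMap.dualMap_injective_of_surjective (f := g') h.surjective,
    LinearMap.dualMap_surjective_of_injective (f := f') h.injective,
    (LinearMap.exact_iff (f := g'.dualMap) (g := f'.dualMap)).2 ?_⟩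
  rw [f'.ker_dualMap_eq_dualAnnihilator_range, g'.range_dualMap_eq_dualAnnihilator_ker, hfg]

end Dual

theorem injective_dual {k A V ι : Type} [Field k] [Ring A] [Algebra k A] [AddCommGroup V]
    [Module k V] [Module A V] [IsScalarTower k A V] [Finite ι] (b : Module.Basis ι A V) :
    Module.Injective Aᵐᵒᵖ (Module.Dual k V) := by
  cases nonempty_fintype ι
  refine injective_of_existsUnique_smul
    (LinearMap.pi fun i ↦ LinearMap.applyₗ (b i) : Module.Dual k V →ₗ[k] ι → k) fun φ ↦ ?_
  let e : Module.Dual k V := ∑ i, LinearMap.proj i ∘ₗ φ ∘ₗ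
    (MulOpposite.opLinearEquiv k).toLinearMap ∘ₗ (b.coord i).restrictScalars k
  have he (v : V) : e v = ∑ i, φ (.op (b.repr v i)) i := by simp [e]
  refine ⟨e, fun a ↦ funext fun i ↦ ?_, fun e' he' ↦ LinearMap.ext fun v ↦ ?_⟩
  · classical
    calc e (a.unop • b i) = ∑ j, φ (.op (a.unop * Finsupp.single i (1 : A) j)) j := by
          simp only [he, map_smul, b.repr_self, Finsupp.smul_apply, smul_eq_mul]
      _ = φ a i := by
          rw [Finset.sum_eq_single i (fun j _ hj ↦ by simp [Finsupp.single_eq_of_ne hj]) (by simp)]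
          simp
  · calc e' v = ∑ i, e' (b.repr v i • b i) := by rw [← map_sum, b.sum_repr]
      _ = e v := (he v).symm ▸ Finset.sum_congr rfl fun i _ ↦ congrFun (he' (.op (b.repr v i))) i

section TiltingBasis

variable {S T ι : Type*} [Ring S] [AddCommGroup T] [Module S T] [Fintype ι] [DecidableEq ι]

variable (S T ι) in
/-- The basis of `Hom_S(T, T^ι)` over `End_S(T)ᵐᵒᵖ` formed by the coordinate inclusions. -/
noncomputable def homPiBasis : Module.Basis ι (Module.End S T)ᵐᵒᵖ (T →ₗ[S] (ι → T)) :=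
  .ofEquivFun
    { toFun f i := .op (LinearMap.proj i ∘ₗ f)
      invFun a := LinearMap.pi fun i ↦ (a i).unop
      map_add' _ _ := rfl
      map_smul' _ _ := rfl
      left_inv _ := rfl
      right_inv _ := rfl }

@[simp]
theorem homPiBasis_apply (i : ι) : homPiBasis S T ι i = LinearMap.single S (fun _ ↦ T) i := by
  rw [homPiBasis, Module.Basis.coe_ofEquivFun, LinearEquiv.symm_apply_eq]
  refine funext fun j ↦ MulOpposite.unop_injective (LinearMap.ext fun x ↦ ?_)
  change _ = Pi.single (M := fun _ ↦ T) i x j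
  simp only [Pi.single_apply]
  split_ifs <;> rfl

variable (S T ι) in
/-- The basis of `Hom_S(T^ι, T)` over `End_S(T)` formed by the coordinate projections. -/
noncomputable def piHomBasis : Module.Basis ι (Module.End S T) ((ι → T) →ₗ[S] T) :=
  .ofEquivFun (LinearMap.lsum S (fun _ ↦ T) (Module.End S T)).symm

@[simp]
theorem piHomBasis_apply (i : ι) : piHomBasis S T ι i = LinearMap.proj i := by
  rw [piHomBasis, Module.Basis.coe_ofEquivFun, LinearEquiv.symm_apply_eq]
  refine funext fun j ↦ LinearMap.ext fun x ↦ ?_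
  change _ = Pi.single (M := fun _ ↦ T) j x i
  simp only [Pi.single_apply, eq_comm (a := i)]
  split_ifs <;> rfl

end TiltingBasis

/-! ### `Hom_S(T, -)` on `F(∇)` -/

section HomOut

variable {S : Type} [Ring S] {A B C T Y : Type} [AddCommGroup A] [Module S A] [AddCommGroup B]
  [Module S B] [AddCommGroup C] [Module S C] [AddCommGroup T] [Module S T] [AddCommGroup Y]
  [Module S Y] {f : A →ₗ[S] B} {g : B →ₗ[S] C}

theorem IsShortExact.homMap (h : IsShortExact f g) (hA : ExtVanish S T A 1) :
    IsShortExact (homMap (Module.End S T) T f) (homMap (Module.End S T) T g) := by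
  refine ⟨fun u v huv ↦ LinearMap.ext fun x ↦ h.injective congr($huv x),
    ExtVanish.exists_lift h hA, fun u ↦ ⟨fun hu ↦ ?_, ?_⟩⟩
  · refine exists_comp_eq_of_range_le h.injective ?_
    rwa [← h.exact.linearMap_ker_eq, LinearMap.range_le_ker_iff]
  · rintro ⟨u, rfl⟩
    rw [homMap_apply, homMap_apply, ← LinearMap.comp_assoc, h.exact.linearMap_comp_eq_zero,
      LinearMap.zero_comp]

section Pi

variable {ι : Type} [Finite ι]

instance : Module.Projective (Module.End S T)ᵐᵒᵖ (T →ₗ[S] (ι → T)) := by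
  cases nonempty_fintype ι
  classical exact .of_basis (homPiBasis S T ι)

instance : Module.Finite (Module.End S T)ᵐᵒᵖ (T →ₗ[S] (ι → T)) := by
  cases nonempty_fintype ι
  classical exact .of_basis (homPiBasis S T ι)

theorem exists_homMap_pi_eq
    (Φ : (T →ₗ[S] (ι → T)) →ₗ[(Module.End S T)ᵐᵒᵖ] (T →ₗ[S] Y)) :
    ∃ u : (ι → T) →ₗ[S] Y, homMap (Module.End S T) T u = Φ := by
  cases nonempty_fintype ι
  classical
  refine ⟨LinearMap.lsum S (fun _ ↦ T) ℕ fun i ↦ Φ (LinearMap.single S (fun _ ↦ T) i),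
    (homPiBasis S T ι).ext fun i ↦ ?_⟩
  rw [homPiBasis_apply]
  exact congrFun ((LinearMap.lsum S (fun _ : ι ↦ T) ℕ).symm_apply_apply _) i

end Pi

namespace QHData.IsTiltingGenerator

variable [IsArtinianRing S] [HasEnoughFiniteInjectives S] {Λ : Type} [Fintype Λ] [PartialOrder Λ]
  {Q : QHData S Λ} {X : Type} [AddCommGroup X] [Module S X]

theorem homMap_injective (hT : Q.IsTiltingGenerator T) (hX : Q.IsGood X) :
    Function.Injective (homMap (Module.End S T) T : (X →ₗ[S] Y) → _) := fun u v h ↦ by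
  obtain ⟨n, p, hp, -⟩ := hT.exists_surjective_pi hX
  refine (LinearMap.cancel_right hp).1 (LinearMap.pi_ext' fun i ↦ ?_)
  exact congr($h (p ∘ₗ LinearMap.single S (fun _ ↦ T) i))

theorem finite_hom (hT : Q.IsTiltingGenerator T) (hX : Q.IsGood X) :
    Module.Finite (Module.End S T)ᵐᵒᵖ (T →ₗ[S] X) := by
  obtain ⟨n, p, hp, hk⟩ := hT.exists_surjective_pi hX
  exact .of_surjective _
    ((isShortExact_ker_subtype hp).homMap (hT.isWeyl.extVanish hk 0)).surjective

theorem exists_homMap_eq (hT : Q.IsTiltingGenerator T) (hX : Q.IsGood X)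
    (Φ : (T →ₗ[S] X) →ₗ[(Module.End S T)ᵐᵒᵖ] (T →ₗ[S] Y)) :
    ∃ u : X →ₗ[S] Y, homMap (Module.End S T) T u = Φ := by
  obtain ⟨n, p, hp, hk⟩ := hT.exists_surjective_pi hX
  obtain ⟨w, hw⟩ := exists_homMap_pi_eq (Φ ∘ₗ homMap (Module.End S T) T p)
  obtain ⟨u, rfl⟩ := exists_comp_eq_of_ker_le hp (f := w) <| by
    have hw0 : w ∘ₗ (LinearMap.ker p).subtype = 0 := hT.homMap_injective hk <|
      LinearMap.ext fun t ↦ calc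
        w ∘ₗ (LinearMap.ker p).subtype ∘ₗ t = Φ (p ∘ₗ (LinearMap.ker p).subtype ∘ₗ t) :=
          congr($hw _)
        _ = 0 := by rw [← LinearMap.comp_assoc, p.comp_ker_subtype, LinearMap.zero_comp, map_zero]
    rwa [← (LinearMap.ker p).range_subtype, LinearMap.range_le_ker_iff]
  refine ⟨u, (LinearMap.cancel_right (g := homMap (Module.End S T) T p) ?_).1 hw⟩
  exact ((isShortExact_ker_subtype hp).homMap (hT.isWeyl.extVanish hk 0)).surjective

theorem isWeyl_of_extVanish_hom (hT : Q.IsTiltingGenerator T) (hX : Q.IsGood X)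
    (h : ∀ (M : ModuleCat.{0} (Module.End S T)ᵐᵒᵖ) [Module.Finite (Module.End S T)ᵐᵒᵖ M],
      ExtVanish (Module.End S T)ᵐᵒᵖ (T →ₗ[S] X) M 1) : Q.IsWeyl X := by
  obtain ⟨n, p, hp, hk⟩ := hT.exists_surjective_pi hX
  have hs := (isShortExact_ker_subtype hp).homMap (hT.isWeyl.extVanish hk 0)
  have := hT.finite_hom hk
  obtain ⟨σ, hσ⟩ := ExtVanish.exists_lift hs (h (.of _ (T →ₗ[S] LinearMap.ker p))) .id
  obtain ⟨s, rfl⟩ := hT.exists_homMap_eq hX σ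
  have hps : p ∘ₗ s = LinearMap.id := hT.homMap_injective hX hσ
  exact ⟨hX.finite, fun l ↦ .left_of_retract hps (hT.isWeyl.pi.extVanish_one l)⟩

theorem forall_extVanish_hom_iff (hT : Q.IsTiltingGenerator T) (hX : Q.IsGood X) (n : ℕ) :
    (∀ (M : ModuleCat.{0} (Module.End S T)ᵐᵒᵖ) [Module.Finite (Module.End S T)ᵐᵒᵖ M],
      ExtVanish (Module.End S T)ᵐᵒᵖ (T →ₗ[S] X) M (n + 1)) ↔
        ∀ l, ExtVanish S X (Q.costd l) (n + 1) := by
  induction n generalizing X with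
  | zero =>
    refine ⟨fun h ↦ (hT.isWeyl_of_extVanish_hom hX h).extVanish_one, fun h M _ ↦ ?_⟩
    obtain ⟨r, p, hp, hk⟩ := hT.exists_surjective_pi hX
    obtain ⟨s, hps⟩ := ExtVanish.exists_lift (isShortExact_ker_subtype hp)
      (IsWeyl.extVanish ⟨hX.finite, h⟩ hk 0) .id
    refine .left_of_retract (i := homMap (Module.End S T) T s) (r := homMap (Module.End S T) T p)
      (LinearMap.ext fun f ↦ ?_) (.of_projective 0)
    rw [LinearMap.comp_apply, homMap_apply, homMap_apply, ← LinearMap.comp_assoc, hps]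
    rfl
  | succ n ih =>
    obtain ⟨r, p, hp, hk⟩ := hT.exists_surjective_pi hX
    have hs := isShortExact_ker_subtype hp
    have hs' := hs.homMap (hT.isWeyl.extVanish hk 0)
    have hcostd (l m) := (hT.isWeyl.pi (ι := Fin r)).extVanish (Q.isGood_costd l) m
    exact ⟨fun h l ↦ .left_right hs
        ((ih hk).1 (fun M _ ↦ .left_left hs' (.of_projective n) (h M)) l) (hcostd l _),
      fun h M _ ↦ .left_right hs'
        ((ih hk).2 (fun l ↦ .left_left hs (hcostd l _) (h l)) M) (.of_projective _)⟩

end QHData.IsTiltingGenerator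

end HomOut

/-! ### `D Hom_S(-, T)` on `F(Δ)` -/

section HomIn

open Module

variable {S : Type} [Ring S] {A B C T Y : Type} [AddCommGroup A] [Module S A] [AddCommGroup B]
  [Module S B] [AddCommGroup C] [Module S C] [AddCommGroup T] [Module S T] [AddCommGroup Y]
  [Module S Y] {f : A →ₗ[S] B} {g : B →ₗ[S] C}

theorem IsShortExact.lcomp (h : IsShortExact f g) (hC : ExtVanish S C T 1) :
    IsShortExact (g.lcomp (End S T) T) (f.lcomp (End S T) T) := by
  refine ⟨fun u v huv ↦ (LinearMap.cancel_right h.surjective).1 huv,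
    ExtVanish.exists_extension h hC, fun u ↦ ⟨fun hu ↦ ?_, ?_⟩⟩
  · refine exists_comp_eq_of_ker_le h.surjective ?_
    rwa [h.exact.linearMap_ker_eq, LinearMap.range_le_ker_iff]
  · rintro ⟨u, rfl⟩
    rw [LinearMap.lcomp_apply', LinearMap.lcomp_apply', LinearMap.comp_assoc,
      h.exact.linearMap_comp_eq_zero, LinearMap.comp_zero]

theorem exists_lcomp_pi_eq {ι : Type} [Finite ι]
    (Φ : ((ι → T) →ₗ[S] T) →ₗ[End S T] (Y →ₗ[S] T)) :
    ∃ u : Y →ₗ[S] (ι → T), u.lcomp (End S T) T = Φ := by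
  cases nonempty_fintype ι
  classical
  refine ⟨LinearMap.pi fun i ↦ Φ (LinearMap.proj i), (piHomBasis S T ι).ext fun i ↦ ?_⟩
  rw [piHomBasis_apply, LinearMap.lcomp_apply', LinearMap.proj_pi]

section FieldDual

variable {k : Type} [Field k] [Algebra k S] [Module k T] [IsScalarTower k S T]

theorem finite_hom_of_finite [Module.Finite S A] [Module.Finite k T] :
    Module.Finite k (A →ₗ[S] T) := by
  obtain ⟨n, p, hp⟩ := Module.Finite.exists_fin' S A
  let e : (A →ₗ[S] T) →ₗ[k] (Fin n → T) :=
    { toFun u i := u (p (Pi.single i 1))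
      map_add' _ _ := rfl
      map_smul' _ _ := rfl }
  refine .of_injective e fun u v huv ↦ (LinearMap.cancel_right hp).1 <|
    LinearMap.pi_ext' fun i ↦ LinearMap.ext_ring congr($huv i)

variable (T k) in
/-- The functor `D Hom_S(-, T)` on maps, where `D` is the `k`-dual. -/
def dualHomMap (g : A →ₗ[S] B) :
    Dual k (A →ₗ[S] T) →ₗ[(End S T)ᵐᵒᵖ] Dual k (B →ₗ[S] T) :=
  dualMapOp k (g.lcomp (End S T) T)

@[simp]
theorem dualHomMap_apply (g : A →ₗ[S] B) (φ : Dual k (A →ₗ[S] T)) (u : B →ₗ[S] T) :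
    dualHomMap T k g φ u = φ (u ∘ₗ g) := rfl

theorem IsShortExact.dualHomMap (h : IsShortExact f g) (hC : ExtVanish S C T 1) :
    IsShortExact (dualHomMap T k f) (dualHomMap T k g) :=
  (h.lcomp hC).dualMapOp

instance injective_dual_hom_pi {ι : Type} [Finite ι] :
    Module.Injective (End S T)ᵐᵒᵖ (Dual k ((ι → T) →ₗ[S] T)) := by
  cases nonempty_fintype ι
  classical exact injective_dual (piHomBasis S T ι)

end FieldDual

namespace QHData.IsTiltingGenerator

variable [IsArtinianRing S] [HasEnoughFiniteInjectives S] {Λ : Type} [Fintype Λ] [PartialOrder Λ]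
  {Q : QHData S Λ} {X : Type} [AddCommGroup X] [Module S X]

theorem lcomp_injective (hT : Q.IsTiltingGenerator T) (hX : Q.IsWeyl X) :
    Function.Injective (LinearMap.lcomp (End S T) T : (Y →ₗ[S] X) → _) := fun u v h ↦ by
  obtain ⟨n, j, hj, -⟩ := hT.exists_injective_pi hX
  exact (LinearMap.cancel_left hj).1 <| LinearMap.ext fun y ↦ funext fun i ↦
    congr($h (LinearMap.proj i ∘ₗ j) y)

theorem exists_lcomp_eq (hT : Q.IsTiltingGenerator T) (hX : Q.IsWeyl X)
    (Φ : (X →ₗ[S] T) →ₗ[End S T] (Y →ₗ[S] T)) :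
    ∃ u : Y →ₗ[S] X, u.lcomp (End S T) T = Φ := by
  obtain ⟨n, j, hj, hc⟩ := hT.exists_injective_pi hX
  have hs := isShortExact_range_mkQ hj
  obtain ⟨w, hw⟩ := exists_lcomp_pi_eq (Φ ∘ₗ j.lcomp (End S T) T)
  obtain ⟨u, rfl⟩ := exists_comp_eq_of_range_le hj (f := w) <| by
    have hw0 : (LinearMap.range j).mkQ ∘ₗ w = 0 := hT.lcomp_injective hc <|
      LinearMap.ext fun t ↦ calc
        (t ∘ₗ (LinearMap.range j).mkQ) ∘ₗ w = Φ ((t ∘ₗ (LinearMap.range j).mkQ) ∘ₗ j) :=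
          LinearMap.congr_fun hw (t ∘ₗ (LinearMap.range j).mkQ)
        _ = 0 := by
          rw [LinearMap.comp_assoc, hs.exact.linearMap_comp_eq_zero, LinearMap.comp_zero, map_zero]
        _ = _ := (LinearMap.comp_zero t).symm
    rwa [← (LinearMap.range j).ker_mkQ, LinearMap.range_le_ker_iff]
  exact ⟨u, (LinearMap.cancel_right (g := j.lcomp (End S T) T)
    (hs.lcomp (hc.extVanish hT.isGood 0)).surjective).1 hw⟩

variable {k : Type} [Field k] [Algebra k S] [Module k T] [IsScalarTower k S T] [Module.Finite k T]

theorem isGood_of_extVanish_dual_hom (hT : Q.IsTiltingGenerator T) (hX : Q.IsWeyl X)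
    (h : ∀ (M : ModuleCat.{0} (End S T)ᵐᵒᵖ) [Module.Finite (End S T)ᵐᵒᵖ M],
      ExtVanish (End S T)ᵐᵒᵖ M (Dual k (X →ₗ[S] T)) 1) : Q.IsGood X := by
  obtain ⟨n, j, hj, hc⟩ := hT.exists_injective_pi hX
  have hs := (isShortExact_range_mkQ hj).dualHomMap (k := k) (hc.extVanish hT.isGood 0)
  have := hT.isGood.finite
  have := hc.finite
  have hfin (A : Type) [AddCommGroup A] [Module S A] [Module.Finite S A] :
    Module.Finite k (A →ₗ[S] T) := finite_hom_of_finite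
  obtain ⟨ρ, hρ⟩ := ExtVanish.exists_extension hs (h (.of _ (Dual k (_ →ₗ[S] T)))) .id
  obtain ⟨Φ, rfl⟩ := exists_dualMapOp_eq ρ
  obtain ⟨u, rfl⟩ := hT.exists_lcomp_eq hX Φ
  have huj : u ∘ₗ j = LinearMap.id := hT.lcomp_injective hX (dualMapOp_injective (k := k) hρ)
  exact ⟨hX.finite, fun l ↦ .right_of_retract huj (hT.isGood.pi.extVanish_one l)⟩

theorem forall_extVanish_dual_hom_iff (hT : Q.IsTiltingGenerator T) (hX : Q.IsWeyl X) (n : ℕ) :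
    (∀ (M : ModuleCat.{0} (End S T)ᵐᵒᵖ) [Module.Finite (End S T)ᵐᵒᵖ M],
      ExtVanish (End S T)ᵐᵒᵖ M (Dual k (X →ₗ[S] T)) (n + 1)) ↔
        ∀ l, ExtVanish S (Q.std l) X (n + 1) := by
  induction n generalizing X with
  | zero =>
    refine ⟨fun h ↦ (hT.isGood_of_extVanish_dual_hom hX h).extVanish_one, fun h M _ ↦ ?_⟩
    obtain ⟨r, j, hj, hc⟩ := hT.exists_injective_pi hX
    obtain ⟨s, hsj⟩ := ExtVanish.exists_extension (isShortExact_range_mkQ hj)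
      (hc.extVanish ⟨hX.finite, h⟩ 0) .id
    refine .right_of_retract (i := dualHomMap T k j) (r := dualHomMap T k s)
      (LinearMap.ext fun φ ↦ LinearMap.ext fun f ↦ ?_) (.of_injective 0)
    rw [LinearMap.comp_apply, dualHomMap_apply, dualHomMap_apply, LinearMap.comp_assoc, hsj]
    rfl
  | succ n ih =>
    obtain ⟨r, j, hj, hc⟩ := hT.exists_injective_pi hX
    have hs := isShortExact_range_mkQ hj
    have hs' := hs.dualHomMap (k := k) (hc.extVanish hT.isGood 0)
    have hstd (l m) := (Q.isWeyl_std l).extVanish (hT.isGood.pi (ι := Fin r)) m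
    exact ⟨fun h l ↦ .right_left hs
        ((ih hc).1 (fun M _ ↦ .right_right hs' (.of_injective n) (h M)) l) (hstd l _),
      fun h M _ ↦ .right_left hs'
        ((ih hc).2 (fun l ↦ .right_right hs (hstd l _) (h l)) M) (.of_injective _)⟩

end QHData.IsTiltingGenerator

end HomIn

/-! ### The comparison of the two functors -/

section HomPairing

open Module

variable {k S : Type} [Field k] [Ring S] [Algebra k S] {X Z T : Type} [AddCommGroup X] [Module S X]
  [AddCommGroup Z] [Module S Z] [AddCommGroup T] [Module S T] [Module k T] [IsScalarTower k S T]

section Pairing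

variable [Module k Z] [IsScalarTower k S Z]

variable (T) in
/-- The comparison map `D Hom_S(X, Z) → Hom_{S'}(F Z, G X)` for `S' = End_S(T)ᵐᵒᵖ`,
`F = Hom_S(T, -)` and `G = D Hom_S(-, T)`. -/
def homPairing (ψ : Dual k (X →ₗ[S] Z)) :
    (T →ₗ[S] Z) →ₗ[(End S T)ᵐᵒᵖ] Dual k (X →ₗ[S] T) where
  toFun f := ψ ∘ₗ LinearMap.compRight k f
  map_add' f f' := LinearMap.ext fun g ↦ by
    simp only [LinearMap.comp_apply, LinearMap.add_apply, LinearMap.compRight_apply,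
      LinearMap.add_comp, map_add]
  map_smul' _ _ := rfl

@[simp]
theorem homPairing_apply (ψ : Dual k (X →ₗ[S] Z)) (f : T →ₗ[S] Z) (g : X →ₗ[S] T) :
    homPairing T ψ f g = ψ (f ∘ₗ g) := rfl

theorem exists_homPairing_pi_eq {ι : Type} [Finite ι]
    (Φ : (T →ₗ[S] (ι → T)) →ₗ[(End S T)ᵐᵒᵖ] Dual k (X →ₗ[S] T)) :
    ∃ ψ : Dual k (X →ₗ[S] (ι → T)), homPairing T ψ = Φ := by
  cases nonempty_fintype ι
  classical
  let ψ : Dual k (X →ₗ[S] (ι → T)) := ∑ i, Φ (LinearMap.single S (fun _ ↦ T) i) ∘ₗ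
    LinearMap.compRight k (LinearMap.proj i)
  refine ⟨ψ, (homPiBasis S T ι).ext fun i ↦ LinearMap.ext fun g ↦ ?_⟩
  rw [homPiBasis_apply, homPairing_apply, LinearMap.sum_apply, Finset.sum_eq_single i]
  · rw [LinearMap.comp_apply, LinearMap.compRight_apply, ← LinearMap.comp_assoc,
      LinearMap.proj_comp_single_same, LinearMap.id_comp]
  · intro j _ hj
    rw [LinearMap.comp_apply, LinearMap.compRight_apply, ← LinearMap.comp_assoc,
      LinearMap.proj_comp_single_ne _ _ _ _ hj, LinearMap.zero_comp, map_zero]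
  · simp

theorem exists_homPairing_comp_homMap_eq {Y : Type} [AddCommGroup Y] [Module S Y] [Module k Y]
    [IsScalarTower k S Y] {f : Z →ₗ[S] Y} (hf : Function.Injective f) (ψ : Dual k (X →ₗ[S] Z)) :
    ∃ Φ : (T →ₗ[S] Y) →ₗ[(End S T)ᵐᵒᵖ] Dual k (X →ₗ[S] T),
      Φ ∘ₗ homMap (End S T) T f = homPairing T ψ := by
  obtain ⟨ψ', rfl⟩ := LinearMap.dualMap_surjective_of_injective
    (f := (LinearMap.compRight k f : (X →ₗ[S] Z) →ₗ[k] (X →ₗ[S] Y)))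
    (fun _ _ ↦ (LinearMap.cancel_left hf).1) ψ
  exact ⟨homPairing T ψ', rfl⟩

end Pairing

namespace QHData.IsTiltingGenerator

variable [IsArtinianRing S] [HasEnoughFiniteInjectives S] {Λ : Type} [Fintype Λ] [PartialOrder Λ]
  {Q : QHData S Λ}

theorem exists_homPairing_eq [Module k Z] [IsScalarTower k S Z] (hT : Q.IsTiltingGenerator T)
    (hX : Q.IsWeyl X) (hZ : Q.IsGood Z)
    (Φ : (T →ₗ[S] Z) →ₗ[(End S T)ᵐᵒᵖ] Dual k (X →ₗ[S] T)) :
    ∃ ψ : Dual k (X →ₗ[S] Z), homPairing T ψ = Φ := by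
  obtain ⟨n, p, hp, hK⟩ := hT.exists_surjective_pi hZ
  obtain ⟨m, q, hq, hL⟩ := hT.exists_surjective_pi hK
  have hs := isShortExact_ker_subtype hp
  obtain ⟨ψ₀, hψ₀⟩ := exists_homPairing_pi_eq (Φ ∘ₗ homMap (End S T) T p)
  have hpair (t : T →ₗ[S] (Fin n → T)) (g : X →ₗ[S] T) : ψ₀ (t ∘ₗ g) = Φ (p ∘ₗ t) g :=
    congr($hψ₀ t g)
  -- A map `X → T^n` killed by `p` factors through `T^m → ker p`, hence is a sum of maps `t ∘ g`
  -- with `p ∘ t = 0`.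
  have hker : LinearMap.ker (LinearMap.compRight k p) ≤ LinearMap.ker ψ₀ := fun u hu ↦ by
    obtain ⟨u', rfl⟩ := exists_comp_eq_of_range_le hs.injective (f := u) <| by
      rwa [← hs.exact.linearMap_ker_eq, LinearMap.range_le_ker_iff]
    obtain ⟨w, rfl⟩ := ExtVanish.exists_lift (isShortExact_ker_subtype hq) (hX.extVanish hL 0) u'
    let v := (LinearMap.ker p).subtype ∘ₗ q
    have hpv : p ∘ₗ v = 0 := by
      rw [← LinearMap.comp_assoc, p.comp_ker_subtype, LinearMap.zero_comp]
    have hw : v ∘ₗ w = ∑ i, (v ∘ₗ LinearMap.single S (fun _ ↦ T) i) ∘ₗ LinearMap.proj i ∘ₗ w :=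
      LinearMap.ext fun x ↦ by
        simp only [LinearMap.sum_apply, LinearMap.comp_apply, ← map_sum, LinearMap.coe_single,
          LinearMap.proj_apply, Finset.univ_sum_single]
    rw [LinearMap.mem_ker, ← LinearMap.comp_assoc, hw, map_sum]
    refine Finset.sum_eq_zero fun i _ ↦ ?_
    rw [hpair, ← LinearMap.comp_assoc, hpv, LinearMap.zero_comp, map_zero, LinearMap.zero_apply]
  have hsurj : Function.Surjective (LinearMap.compRight k p : (X →ₗ[S] _) →ₗ[k] _) :=
    ExtVanish.exists_lift hs (hX.extVanish hK 0)
  obtain ⟨ψ, hψ⟩ := exists_comp_eq_of_ker_le hsurj hker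
  refine ⟨ψ, (LinearMap.cancel_right (g := homMap (End S T) T p)
    (hs.homMap (hT.isWeyl.extVanish hK 0)).surjective).1 (LinearMap.ext fun t ↦
      LinearMap.ext fun g ↦ ?_)⟩
  exact congr($hψ (t ∘ₗ g)).trans (hpair t g)

theorem hom_dual_hom_eq_zero (hT : Q.IsTiltingGenerator T) (hX : Q.IsWeyl X) (hZ : Q.IsGood Z)
    (h : ∀ u : X →ₗ[S] Z, u = 0)
    (Φ : (T →ₗ[S] Z) →ₗ[(End S T)ᵐᵒᵖ] Dual k (X →ₗ[S] T)) : Φ = 0 := by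
  let : Module k Z := .compHom Z (algebraMap k S)
  have : IsScalarTower k S Z := .of_algebraMap_smul fun _ _ ↦ rfl
  obtain ⟨ψ, rfl⟩ := hT.exists_homPairing_eq hX hZ Φ
  refine LinearMap.ext fun f ↦ LinearMap.ext fun g ↦ ?_
  rw [homPairing_apply, h (f ∘ₗ g), map_zero]
  rfl

theorem extVanish_hom_dual_hom (hT : Q.IsTiltingGenerator T) (hX : Q.IsWeyl X)
    (hZ : Q.IsGood Z) :
    ExtVanish (End S T)ᵐᵒᵖ (T →ₗ[S] Z) (Dual k (X →ₗ[S] T)) 1 := by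
  obtain ⟨n, p, hp, hK⟩ := hT.exists_surjective_pi hZ
  have hs := (isShortExact_ker_subtype hp).homMap (hT.isWeyl.extVanish hK 0)
  refine .one_of_extension hs (.of_projective 0) fun Φ ↦ ?_
  obtain ⟨ψ, rfl⟩ := hT.exists_homPairing_eq hX hK Φ
  exact exists_homPairing_comp_homMap_eq (LinearMap.ker p).injective_subtype ψ

end QHData.IsTiltingGenerator

end HomPairing

/-! ### Transfer of the filtration dimensions -/

section Main

open Module

namespace QHData

variable {S Λ : Type} [Ring S] [Fintype Λ] [PartialOrder Λ]

theorem exists_generator_section (Q : QHData S Λ) (l : Λ) :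
    ∃ (v : Q.P l) (σ : Q.P l →ₗ[S] S), v ≠ 0 ∧ ∀ x, σ x • v = x := by
  obtain ⟨v, hv⟩ := Q.exists_span_singleton_eq_top l
  obtain ⟨σ, hσ⟩ := Module.projective_lifting_property (LinearMap.toSpanSingleton S _ v) .id
    (LinearMap.range_eq_top.1 (by rw [LinearMap.range_toSpanSingleton, hv]))
  have hσv (x) : σ x • v = x := congr($hσ x)
  refine ⟨v, σ, fun h ↦ Q.head_ne_zero l (LinearMap.ext fun x ↦ ?_), hσv⟩
  rw [← hσv x, h, smul_zero, map_zero, map_zero]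

variable [IsArtinianRing S] [HasEnoughFiniteInjectives S] {Q : QHData S Λ} {T : Type}
  [AddCommGroup T] [Module S T]

theorem IsGood.exists_surjective_costd_comp_eq (hT : Q.IsGood T) {ε : End S T}
    (hε : IsIdempotentElem ε) (hε0 : ε ≠ 0) : ∃ (l : Λ) (h : T →ₗ[S] Q.costd l),
      Function.Surjective h ∧ Q.IsGood (LinearMap.ker h) ∧ h ∘ₗ ε = h := by
  have := hT.finite
  have hret : ε.rangeRestrict ∘ₗ (LinearMap.range ε).subtype = LinearMap.id := by
    ext ⟨_, x, rfl⟩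
    exact congr($hε.eq x)
  have hrange : Q.IsGood (LinearMap.range ε) :=
    ⟨inferInstance, fun m ↦ (hT.extVanish_one m).right_of_retract hret⟩
  have : Nontrivial (LinearMap.range ε) :=
    Submodule.nontrivial_iff_ne_bot.2 (mt LinearMap.range_eq_bot.1 hε0)
  obtain ⟨l, π, hπ, hk⟩ := hrange.exists_surjective_costd
  have hh : Function.Surjective (π ∘ₗ ε.rangeRestrict) := hπ.comp ε.surjective_rangeRestrict
  refine ⟨l, _, hh, ⟨inferInstance, fun m ↦ .one_of_lift (isShortExact_ker_subtype hh)
    (hT.extVanish_one m) fun u ↦ ?_⟩, LinearMap.ext fun x ↦ ?_⟩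
  · obtain ⟨w, rfl⟩ := ExtVanish.exists_lift (isShortExact_ker_subtype hπ) (hk.extVanish_one m) u
    exact ⟨(LinearMap.range ε).subtype ∘ₗ w, by
      rw [LinearMap.comp_assoc, ← LinearMap.comp_assoc w, hret, LinearMap.id_comp]⟩
  · exact congrArg π (Subtype.ext congr($hε.eq x))

theorem wfdAlg_le_iff_of_surjective_costd {G : Λ → ModuleCat.{0} S}
    (hG : ∀ l, Q.IsGood (G l))
    (hcostd : ∀ l, ∃ p : G l →ₗ[S] Q.costd l, Function.Surjective p ∧ Q.IsGood (LinearMap.ker p))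
    {n : ℕ} : wfdAlg S Q ≤ n ↔ ∀ (l : Λ) (m : ℕ), n ≤ m →
      ∀ (M : ModuleCat.{0} S) [Module.Finite S M], ExtVanish S M (G l) (m + 1) := by
  refine wfdAlg_le_iff.trans ⟨fun h l m hm M _ ↦
    (isGood_iff.1 (hG l)).extVanish_right fun l' ↦ h M l' m hm, fun h ↦ ?_⟩
  obtain ⟨b, hb⟩ := Q.exists_forall_extVanish
  suffices key : ∀ j m : ℕ, n ≤ m → b ≤ m + j → ∀ (M : ModuleCat.{0} S) [Module.Finite S M]
      (l : Λ), ExtVanish S M (Q.costd l) (m + 1) from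
    fun M _ l m hm ↦ key b m hm (by omega) M l
  intro j
  induction j with
  | zero => exact fun m _ hm M _ l ↦ hb _ _ _ (by omega)
  | succ j ih =>
    intro m hm hj M _ l
    obtain ⟨p, hp, hk⟩ := hcostd l
    exact .right_right (isShortExact_ker_subtype hp) (h l m hm M)
      ((isGood_iff.1 hk).extVanish_right fun l' ↦ ih (m + 1) (by omega) (by omega) M l')

variable {Q' : QHData (End S T)ᵐᵒᵖ Λᵒᵈ}

-- The projective cover `P'(l)` is `End_S(T)ᵐᵒᵖ ε` for an idempotent `ε`; the top `∇(m)` of the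
-- summand `ε T` gives a surjection `P'(l) → Hom_S(T, ∇(m)) ≅ Δ'(m)`, which forces `l = m`.
theorem isTiltingGenerator_of_std_equiv (hgood : Q.IsGood T) (hweyl : Q.IsWeyl T)
    (he : ∀ l, Nonempty (Q'.std (.toDual l) ≃ₗ[(End S T)ᵐᵒᵖ] (T →ₗ[S] Q.costd l))) :
    Q.IsTiltingGenerator T := by
  refine ⟨hgood, hweyl, fun l ↦ ?_⟩
  obtain ⟨v, σ, hv, hσ⟩ := Q'.exists_generator_section (.toDual l)
  have hidem : σ v * σ v = σ v := by rw [← smul_eq_mul, ← map_smul, hσ]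
  have hσv : (σ v).unop ≠ 0 := fun h ↦ hv <| by
    rw [← hσ v, MulOpposite.unop_eq_zero_iff _ |>.1 h, zero_smul]
  obtain ⟨m, h, hh, hk, hhε⟩ :=
    hgood.exists_surjective_costd_comp_eq (congrArg MulOpposite.unop hidem) hσv
  let b : Q'.P (.toDual l) →ₗ[(End S T)ᵐᵒᵖ] (T →ₗ[S] Q.costd m) :=
    LinearMap.toSpanSingleton _ _ h ∘ₗ σ
  have hb : Function.Surjective b := fun f ↦ by
    obtain ⟨c, rfl⟩ := ExtVanish.exists_lift (isShortExact_ker_subtype hh) (hweyl.extVanish hk 0) f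
    have hbv : b v = h := hhε
    exact ⟨MulOpposite.op c • v, by rw [map_smul, hbv]; rfl⟩
  obtain ⟨e⟩ := he m
  have hne : Q'.stdHead (.toDual m) ∘ₗ e.symm.toLinearMap ∘ₗ b ≠ 0 :=
    LinearMap.ne_zero_of_surjective
      ((Q'.stdHead_surjective _).comp (e.symm.surjective.comp hb))
  obtain rfl : l = m := OrderDual.toDual.injective (eq_of_hom_L_ne_zero hne)
  exact ⟨h, hh, hk⟩

end QHData

namespace QHData.IsTiltingGenerator

variable {S Λ : Type} [Ring S] [Fintype Λ] [PartialOrder Λ] [IsArtinianRing S]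
  [HasEnoughFiniteInjectives S] {Q : QHData S Λ} {T : Type} [AddCommGroup T] [Module S T]
  {Q' : QHData (End S T)ᵐᵒᵖ Λᵒᵈ}

section Standard

variable {k : Type} [Field k] [Algebra k S] [Module k T] [IsScalarTower k S T]

theorem nontrivial_dual_hom_std (hT : Q.IsTiltingGenerator T) (l : Λ) :
    Nontrivial (Dual k (Q.std l →ₗ[S] T)) := by
  obtain ⟨n, j, hj, -⟩ := hT.exists_injective_pi (Q.isWeyl_std l)
  have := Q.nontrivial_std l
  have hne : j ≠ 0 := LinearMap.ne_zero_of_injective hj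
  obtain ⟨i, hi⟩ : ∃ i, LinearMap.proj i ∘ₗ j ≠ 0 := by
    by_contra! h
    exact hne (LinearMap.ext fun x ↦ funext fun i ↦ congr($(h i) x))
  have : Nontrivial (Q.std l →ₗ[S] T) := ⟨_, _, hi⟩
  infer_instance

variable [Module.Finite k T]

theorem isGood_dual_hom_std (hT : Q.IsTiltingGenerator T)
    (he : ∀ l, Nonempty (Q'.std (.toDual l) ≃ₗ[(End S T)ᵐᵒᵖ] (T →ₗ[S] Q.costd l))) (l : Λ) :
    Q'.IsGood (Dual k (Q.std l →ₗ[S] T)) := by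
  have := (Q.isWeyl_std l).finite
  have : Module.Finite k (Q.std l →ₗ[S] T) := finite_hom_of_finite
  refine ⟨inferInstance, fun m ↦ ?_⟩
  obtain ⟨e⟩ := he (OrderDual.ofDual m)
  exact (hT.extVanish_hom_dual_hom (Q.isWeyl_std l) (Q.isGood_costd _)).left_congr e

variable [IsArtinianRing (End S T)ᵐᵒᵖ] [HasEnoughFiniteInjectives (End S T)ᵐᵒᵖ]

theorem exists_surjective_dual_hom_std (hT : Q.IsTiltingGenerator T)
    (he : ∀ l, Nonempty (Q'.std (.toDual l) ≃ₗ[(End S T)ᵐᵒᵖ] (T →ₗ[S] Q.costd l))) (l : Λ) :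
    ∃ p : Dual k (Q.std l →ₗ[S] T) →ₗ[(End S T)ᵐᵒᵖ] Q'.costd (.toDual l),
      Function.Surjective p ∧ Q'.IsGood (LinearMap.ker p) := by
  have := hT.nontrivial_dual_hom_std (k := k) l
  obtain ⟨m, p, hp, hk⟩ := (hT.isGood_dual_hom_std (k := k) he l).exists_surjective_costd
  obtain ⟨w, hw⟩ := ExtVanish.exists_lift (isShortExact_ker_subtype hp) (hk.extVanish_one m)
    (Q'.costdSocle m ∘ₗ Q'.stdHead m)
  obtain ⟨e⟩ := he (OrderDual.ofDual m)
  obtain rfl : l = OrderDual.ofDual m := by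
    by_contra hlm
    have hwe : w ∘ₗ e.symm.toLinearMap = 0 := hT.hom_dual_hom_eq_zero (Q.isWeyl_std l)
      (Q.isGood_costd _) (hom_std_costd_eq_zero hlm) _
    have hw0 : w = 0 := (LinearMap.cancel_right e.symm.surjective).1 hwe
    rw [hw0, LinearMap.comp_zero] at hw
    exact LinearMap.ne_zero_of_surjective (Q'.stdHead_surjective m)
      ((LinearMap.cancel_left (Q'.costdSocle_injective m)).1 (hw.symm.trans
        (LinearMap.comp_zero _).symm))
  exact ⟨p, hp, hk⟩

end Standard

variable [IsArtinianRing (End S T)ᵐᵒᵖ] [HasEnoughFiniteInjectives (End S T)ᵐᵒᵖ]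

theorem gfdAlg_le_iff_wfdAlg_le (k : Type) [Field k] [Algebra k S] [Module k T]
    [IsScalarTower k S T] [Module.Finite k T] (hT : Q.IsTiltingGenerator T)
    (he : ∀ l, Nonempty (Q'.std (.toDual l) ≃ₗ[(End S T)ᵐᵒᵖ] (T →ₗ[S] Q.costd l))) (n : ℕ) :
    gfdAlg S Q ≤ n ↔ wfdAlg (End S T)ᵐᵒᵖ Q' ≤ n := by
  rw [gfdAlg_le_iff_std, wfdAlg_le_iff_of_surjective_costd (G := fun l ↦ .of _
    (Dual k (Q.std (OrderDual.ofDual l) →ₗ[S] T))) (fun l ↦ hT.isGood_dual_hom_std he _)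
      fun l ↦ hT.exists_surjective_dual_hom_std he _]
  exact ⟨fun h l m hm ↦ (hT.forall_extVanish_dual_hom_iff (Q.isWeyl_std _) m).2
      fun l' ↦ h l' _ m hm,
    fun h l l' m hm ↦ (hT.forall_extVanish_dual_hom_iff (Q.isWeyl_std l') m).1 (h l' m hm) l⟩

theorem wfdAlg_le_iff_gfdAlg_le (hT : Q.IsTiltingGenerator T)
    (he : ∀ l, Nonempty (Q'.std (.toDual l) ≃ₗ[(End S T)ᵐᵒᵖ] (T →ₗ[S] Q.costd l))) (n : ℕ) :
    wfdAlg S Q ≤ n ↔ gfdAlg (End S T)ᵐᵒᵖ Q' ≤ n := by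
  rw [wfdAlg_le_iff_costd, gfdAlg_le_iff]
  refine ⟨fun h M _ l m hm ↦ ?_, fun h l l' m hm ↦ ?_⟩
  · obtain ⟨e⟩ := he (OrderDual.ofDual l)
    exact ((hT.forall_extVanish_hom_iff (Q.isGood_costd _) m).2
      (fun l' ↦ h _ l' m hm) M).left_congr e
  · obtain ⟨e⟩ := he l
    exact (hT.forall_extVanish_hom_iff (Q.isGood_costd l) m).1
      (fun M _ ↦ (h M _ m hm).left_congr e.symm) l'

end QHData.IsTiltingGenerator

end Main

end QHPaper

open QHPaper in
/-- Let `S` be a quasi-hereditary algebra with Ringel dual `S'`. Then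
`gfd(S) = wfd(S')` and `wfd(S) = gfd(S')`. -/
theorem stmt8 (k S Λ : Type) [Field k] [Ring S] [Algebra k S] [FiniteDimensional k S]
    [Fintype Λ] [PartialOrder Λ]
    (QH : QHData S Λ) (T : ModuleCat.{0} S)
    (QH' : QHData (RingelDualRing S T) Λᵒᵈ)
    (hRD : IsRingelDualData S QH T QH') :
    gfdAlg S QH = wfdAlg (RingelDualRing S T) QH' ∧
    wfdAlg S QH = gfdAlg (RingelDualRing S T) QH' := by
  let : Module k T := .compHom T (algebraMap k S)
  have : IsScalarTower k S T := .of_algebraMap_smul fun _ _ ↦ rfl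
  obtain ⟨⟨⟨hweyl, hgood⟩, hfin, -⟩, he⟩ := hRD
  have : Module.Finite k T := .trans S T
  have : Module.Finite k (Module.End S T) := finite_hom_of_finite
  have : Module.Finite k (RingelDualRing S T) := .equiv (MulOpposite.opLinearEquiv k)
  have : IsArtinianRing S := .of_finite k S
  have : IsArtinianRing (RingelDualRing S T) := .of_finite k _
  have := hasEnoughFiniteInjectives_of_finite k S
  have := hasEnoughFiniteInjectives_of_finite k (RingelDualRing S T)
  have hT : QH.IsTiltingGenerator T := QHData.isTiltingGenerator_of_std_equiv
    (QHData.isGood_iff_inCostdFilt.2 hgood) (QHData.isWeyl_iff_inStdFilt.2 hweyl) he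
  exact ⟨eq_of_forall_ge_iff fun n ↦ hT.gfdAlg_le_iff_wfdAlg_le k he n,
    eq_of_forall_ge_iff fun n ↦ hT.wfdAlg_le_iff_gfdAlg_le he n⟩
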